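/- arXiv:1204.4397 — 2 statements merged into one kernel-verified Lean document; each statement's English description precedes it below -/
import Mathlib

section
/- Let (u, v) be a solution of the p-system of class C² on the semi-infinite cylinder [t₀, ∞) × ℝ (1-periodic in x). If the initial data at t = t₀ is strictly hyperbolic, i.e. u(t₀, x) < 0 for all x, then u(t, x) < 0 everywhere on [t₀, ∞) × ℝ and moreover u and v are constant functions. -/
/-!
Where `u ≤ 0` the Riemann invariants `r = v + q(u)` and `s = v - q(u)` satisfy `rₜ = λ rₓ` and
`sₜ = -λ sₓ` with `λ = √(-p'(u))`. Along a characteristic `x' = -λ`, the quantity `w = √λ rₓ`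
obeys Lax's Riccati equation `w' = p''/(4 λ^{5/2}) w²` (`Sol.riccati`). If `rₓ > 0` at the
starting point, then `w` increases, whereas `w` vanishes on `u = 0`; so the characteristic never
leaves the hyperbolic region. It exists for all time, and hence `∫ p''/(4 λ^{5/2}) dt` stays
bounded along it. As the integrand is bounded below where `λ ≤ λ(-M)`, the characteristic must
travel to the left with mean speed at least `λ(-M)`, for every `M`, up to a bounded error
(`Sol.exists_char`). The reflection `x ↦ -x`, `v ↦ -v` gives the same for `s`, to the right.

This is used twice. First, it gives `u ≤ 0` for all time:
* if `rₓ > 0` somewhere and `sₓ > 0` somewhere initially, two such characteristics, shifted by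
  periods, meet and enclose any given point together with the initial line. Where `u > 0` the
  equation `uₜₜ + (p(u))ₓₓ = 0` is elliptic, so the maximum principle excludes `u > 0` in a
  region on whose boundary `u < 0` (`Sol.no_elliptic`, `Sol.nonpos_of_both`);
* otherwise `r` or `s` is initially constant by periodicity, and the maximum principle for the
  transport equations keeps `q(u)` positive (`Sol.nonpos_of_r_const`).

Secondly, once `u ≤ 0` for all time, `r` and `s` stay bounded, so `u ≥ -M` for some `M` and no
characteristic is faster than `λ(-M) < λ(-(M + 1))`. This contradicts the speed bound with `M + 1`
unless `rₓ ≤ 0` everywhere initially (`Sol.rx_nonpos`); by periodicity `r` is constant, and likewise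
`s`, so `u` and `v` are constant.

The argument is run from times `t₁ > t₀`, where two-sided derivatives are available, and the
result is extended to `t₀` by continuity.
-/

/-- `q(w) = ∫_w^0 √(-p'(s)) ds`. -/
noncomputable def qfun (p : ℝ → ℝ) (w : ℝ) : ℝ :=
  ∫ s in w..(0:ℝ), Real.sqrt (-(deriv p s))

/-- `(u, v)` solves the p-system `u_t = -v_x`, `v_t = (p(u))_x` on the domain `D`. -/
def PSystem (p : ℝ → ℝ) (u v : ℝ × ℝ → ℝ) (D : Set (ℝ × ℝ)) : Prop :=
  ∀ z ∈ D,
    deriv (fun s => u (s, z.2)) z.1 = -deriv (fun y => v (z.1, y)) z.2 ∧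
    deriv (fun s => v (s, z.2)) z.1 = deriv (fun y => p (u (z.1, y))) z.2

open Set Filter Topology

/-! ### The pressure law -/

/-- A strictly convex `C²` pressure law with critical point `0`. Only `p'` enters the system, so
the value `p 0` is left free. -/
structure Law (p : ℝ → ℝ) : Prop where
  smooth : ContDiff ℝ 2 p
  conv : ∀ w : ℝ, 0 < deriv (deriv p) w
  crit : deriv p 0 = 0

/-- The characteristic speed `λ(w) = √(-p'(w))`; it vanishes for `w ≥ 0`. -/
noncomputable def lam (p : ℝ → ℝ) (w : ℝ) : ℝ := Real.sqrt (-(deriv p w))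

namespace Law

variable {p : ℝ → ℝ}

lemma contDiff_deriv (h : Law p) : ContDiff ℝ 1 (deriv p) :=
  ((contDiff_succ_iff_deriv (n := 1)).1 (by simpa [one_add_one_eq_two] using h.smooth)).2.2

lemma hasDerivAt (h : Law p) (w : ℝ) : HasDerivAt p (deriv p w) w :=
  (h.smooth.differentiable (by norm_num) w).hasDerivAt

lemma hasDerivAt' (h : Law p) (w : ℝ) : HasDerivAt (deriv p) (deriv (deriv p) w) w :=
  (h.contDiff_deriv.differentiable (by norm_num) w).hasDerivAt

lemma continuous' (h : Law p) : Continuous (deriv p) := h.contDiff_deriv.continuous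

lemma continuous'' (h : Law p) : Continuous (deriv (deriv p)) :=
  h.contDiff_deriv.continuous_deriv le_rfl

lemma strictMono (h : Law p) : StrictMono (deriv p) := strictMono_of_deriv_pos h.conv

lemma deriv_neg (h : Law p) {w : ℝ} (hw : w < 0) : deriv p w < 0 := by
  have := h.strictMono hw
  rwa [h.crit] at this

lemma deriv_pos (h : Law p) {w : ℝ} (hw : 0 < w) : 0 < deriv p w := by
  have := h.strictMono hw
  rwa [h.crit] at this

lemma deriv_nonpos (h : Law p) {w : ℝ} (hw : w ≤ 0) : deriv p w ≤ 0 := by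
  have := h.strictMono.monotone hw
  rwa [h.crit] at this

lemma lam_pos (h : Law p) {w : ℝ} (hw : w < 0) : 0 < lam p w :=
  Real.sqrt_pos.2 (by linarith [h.deriv_neg hw])

lemma lam_sq (h : Law p) {w : ℝ} (hw : w ≤ 0) : lam p w ^ 2 = -deriv p w :=
  Real.sq_sqrt (by linarith [h.deriv_nonpos hw])

lemma continuous_lam (h : Law p) : Continuous (lam p) := h.continuous'.neg.sqrt

lemma antitone_lam (h : Law p) : Antitone (lam p) := fun _ _ hab =>
  Real.sqrt_le_sqrt (neg_le_neg (h.strictMono.monotone hab))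

lemma neg_of_lam_pos (h : Law p) {w : ℝ} (hw : 0 < lam p w) : w < 0 := by
  by_contra hc
  have h1 := h.strictMono.monotone (not_lt.1 hc)
  rw [h.crit] at h1
  have := Real.sqrt_pos.1 hw
  linarith

lemma hasDerivAt_qfun (h : Law p) (w : ℝ) : HasDerivAt (qfun p) (-lam p w) w := by
  have hc : Continuous fun s => Real.sqrt (-(deriv p s)) := h.continuous_lam
  exact intervalIntegral.integral_hasDerivAt_left (hc.intervalIntegrable _ _)
    hc.stronglyMeasurable.stronglyMeasurableAtFilter hc.continuousAt

lemma qfun_zero : qfun p 0 = 0 := by simp [qfun]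

lemma qfun_strictAnti (h : Law p) : StrictAntiOn (qfun p) (Iic 0) := by
  refine strictAntiOn_of_deriv_neg (convex_Iic 0)
    (fun w _ => (h.hasDerivAt_qfun w).continuousAt.continuousWithinAt) ?_
  intro w hw
  rw [interior_Iic] at hw
  rw [(h.hasDerivAt_qfun w).deriv]
  linarith [h.lam_pos hw]

/-- Since `λ ≥ λ(-1) > 0` on `(-∞, -1]`, a bound on `q(w)` bounds `w` from below. -/
lemma exists_lower (h : Law p) (Q : ℝ) : ∃ M > 0, ∀ w, qfun p w ≤ Q → -M ≤ w := by
  have hK := h.lam_pos (w := -1) (by norm_num)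
  have hanti : AntitoneOn (fun w => qfun p w + lam p (-1) * w) (Iic (-1)) := by
    have hd : ∀ w, HasDerivAt (fun w => qfun p w + lam p (-1) * w)
        (-lam p w + lam p (-1) * 1) w := fun w =>
      (h.hasDerivAt_qfun w).add ((hasDerivAt_id w).const_mul _)
    refine antitoneOn_of_deriv_nonpos (convex_Iic _)
      (fun w _ => (hd w).continuousAt.continuousWithinAt)
      (fun w _ => (hd w).differentiableAt.differentiableWithinAt) ?_
    intro w hw
    rw [interior_Iic] at hw
    rw [(hd w).deriv]
    have := h.antitone_lam (le_of_lt hw)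
    linarith
  refine ⟨max 2 ((Q - qfun p (-1)) / lam p (-1) + 1), by positivity, ?_⟩
  intro w hw
  by_contra hc
  push Not at hc
  have h1 : w < -2 := by linarith [le_max_left 2 ((Q - qfun p (-1)) / lam p (-1) + 1)]
  have h2 : (Q - qfun p (-1)) / lam p (-1) < -w - 1 := by
    linarith [le_max_right 2 ((Q - qfun p (-1)) / lam p (-1) + 1)]
  rw [div_lt_iff₀ hK] at h2
  have h3 := hanti (a := w) (b := -1) (by simp; linarith) (by simp) (by linarith)
  simp only at h3
  nlinarith

/-- The coefficient `p''/(4 λ^{5/2})` of the Riccati equation, bounded below by `c (K - λ)` with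
`K = λ(-M)`. The bound is vacuous where `λ > K`; elsewhere `w ∈ [-M, 0)`, where `p''` is bounded
below. -/
lemma exists_riccati (h : Law p) {M : ℝ} (hM : 0 < M) : ∃ c > 0, ∀ w < 0,
    c * (lam p (-M) - lam p w) ≤ deriv (deriv p) w / (4 * lam p w ^ 2 * √(lam p w)) := by
  have hK := h.lam_pos (w := -M) (by linarith)
  obtain ⟨y, hy, hmin⟩ := (isCompact_Icc (a := -M) (b := 0)).exists_isMinOn
    ⟨0, by simp; linarith⟩ h.continuous''.continuousOn
  have hp := h.conv y
  set K := lam p (-M)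
  have hsK : 0 < √K := Real.sqrt_pos.2 hK
  refine ⟨deriv (deriv p) y / (4 * K ^ 2 * √K) / K, by positivity, fun w hw => ?_⟩
  have hl := h.lam_pos hw
  have hsl : 0 < √(lam p w) := Real.sqrt_pos.2 hl
  have hw2 := h.conv w
  rcases le_or_gt (lam p w) K with hle | hgt
  · have hwM : -M ≤ w := by
      by_contra hc
      push Not at hc
      have h1 : -deriv p w ≤ -deriv p (-M) := by
        rw [← h.lam_sq hw.le, ← h.lam_sq (w := -M) (by linarith)]
        exact pow_le_pow_left₀ hl.le hle 2
      have := h.strictMono hc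
      linarith
    have h2 : deriv (deriv p) y ≤ deriv (deriv p) w := hmin ⟨hwM, hw.le⟩
    calc deriv (deriv p) y / (4 * K ^ 2 * √K) / K * (K - lam p w)
        ≤ deriv (deriv p) y / (4 * K ^ 2 * √K) / K * K := by
          gcongr; linarith
      _ = deriv (deriv p) y / (4 * K ^ 2 * √K) := by field_simp
      _ ≤ _ := by gcongr
  · have h3 : deriv (deriv p) y / (4 * K ^ 2 * √K) / K * (K - lam p w) ≤ 0 :=
      mul_nonpos_of_nonneg_of_nonpos (by positivity) (by linarith)
    exact h3.trans (by positivity)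

end Law

/-! ### Solutions in first-order form -/

/-- The linear form `(s, y) ↦ a s + b y`, i.e. the differential with partials `∂ₜ = a`,
`∂ₓ = b`. -/
noncomputable def pd (a b : ℝ) : ℝ × ℝ →L[ℝ] ℝ :=
  a • ContinuousLinearMap.fst ℝ ℝ ℝ + b • ContinuousLinearMap.snd ℝ ℝ ℝ

@[simp] lemma pd_apply (a b : ℝ) (z : ℝ × ℝ) : pd a b z = a * z.1 + b * z.2 := by
  simp [pd]

/-- A periodic `C²` solution on the open region `t > t₀`, with its `x`-derivatives `α = uₓ`,
`β = vₓ`, `αx = uₓₓ`, `βx = vₓₓ` as explicit functions. The `t`-derivatives are those dictated by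
the p-system and its `x`-derivative. -/
structure Sol (p : ℝ → ℝ) (t₀ : ℝ) (u v α β αx βx : ℝ × ℝ → ℝ) : Prop where
  hu : ∀ z : ℝ × ℝ, t₀ < z.1 → HasFDerivAt u (pd (-β z) (α z)) z
  hv : ∀ z : ℝ × ℝ, t₀ < z.1 → HasFDerivAt v (pd (deriv p (u z) * α z) (β z)) z
  hα : ∀ z : ℝ × ℝ, t₀ < z.1 → HasFDerivAt α (pd (-βx z) (αx z)) z
  hβ : ∀ z : ℝ × ℝ, t₀ < z.1 →
    HasFDerivAt β (pd (deriv (deriv p) (u z) * α z ^ 2 + deriv p (u z) * αx z) (βx z)) z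
  uper : ∀ t x : ℝ, u (t, x + 1) = u (t, x)
  vper : ∀ t x : ℝ, v (t, x + 1) = v (t, x)
  αper : ∀ t x : ℝ, α (t, x + 1) = α (t, x)
  βper : ∀ t x : ℝ, β (t, x + 1) = β (t, x)

lemma hasDerivAt_comp_curve {f : ℝ × ℝ → ℝ} {a b : ℝ} {γ : ℝ → ℝ} {c t : ℝ}
    (hf : HasFDerivAt f (pd a b) (t, γ t)) (hγ : HasDerivAt γ c t) :
    HasDerivAt (fun s => f (s, γ s)) (a + b * c) t := by
  have := hf.comp_hasDerivAt t ((hasDerivAt_id t).prodMk hγ)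
  simpa [Function.comp_def] using this

lemma hasDerivAt_fst {f : ℝ × ℝ → ℝ} {a b t x : ℝ}
    (hf : HasFDerivAt f (pd a b) (t, x)) : HasDerivAt (fun s => f (s, x)) a t := by
  simpa using hasDerivAt_comp_curve (γ := fun _ => x) hf (hasDerivAt_const t x)

lemma hasDerivAt_snd {f : ℝ × ℝ → ℝ} {a b t x : ℝ}
    (hf : HasFDerivAt f (pd a b) (t, x)) : HasDerivAt (fun y => f (t, y)) b x := by
  have := hf.comp_hasDerivAt x ((hasDerivAt_const x t).prodMk (hasDerivAt_id x))
  simpa [Function.comp_def] using this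

lemma periodic_fract {f : ℝ × ℝ → ℝ} (hf : ∀ t x : ℝ, f (t, x + 1) = f (t, x)) (t x : ℝ) :
    ∃ y ∈ Icc (0 : ℝ) 1, f (t, x) = f (t, y) := by
  have hp : Function.Periodic (fun x => f (t, x)) 1 := hf t
  obtain ⟨y, hy, h⟩ := hp.exists_mem_Ico₀ one_pos x
  exact ⟨y, Ico_subset_Icc_self hy, h⟩

lemma periodic_bounded {f : ℝ × ℝ → ℝ} (hf : ∀ t x : ℝ, f (t, x + 1) = f (t, x)) {a b : ℝ}
    (hc : ∀ z : ℝ × ℝ, a ≤ z.1 → ContinuousAt f z) :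
    ∃ C > 0, ∀ t ∈ Icc a b, ∀ x, |f (t, x)| ≤ C := by
  have hK : IsCompact (Icc a b ×ˢ Icc (0 : ℝ) 1) := isCompact_Icc.prod isCompact_Icc
  obtain ⟨C, hC⟩ := hK.exists_bound_of_continuousOn (f := f)
    (fun z hz => (hc z hz.1.1).continuousWithinAt)
  refine ⟨max C 1, by positivity, fun t ht x => ?_⟩
  obtain ⟨y, hy, h⟩ := periodic_fract hf t x
  rw [h]
  exact (hC (t, y) ⟨ht, hy⟩).trans (le_max_left _ _)

/-- Maximum principle for the transport equation `fₜ = c fₓ`, with no regularity of `c`. -/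
lemma transport_max {f fx c : ℝ × ℝ → ℝ} {a b B : ℝ}
    (hper : ∀ t x : ℝ, f (t, x + 1) = f (t, x))
    (hf : ∀ z : ℝ × ℝ, a ≤ z.1 → z.1 ≤ b → HasFDerivAt f (pd (c z * fx z) (fx z)) z)
    (hB : ∀ x, f (a, x) ≤ B) : ∀ t ∈ Icc a b, ∀ x, f (t, x) ≤ B := by
  intro t ht x
  refine le_of_forall_pos_le_add fun ε hε => ?_
  -- a small slope in `t` makes the maximum principle strict
  set δ := ε / (b - a + 1) with hδ
  have hab : 0 < b - a + 1 := by linarith [ht.1, ht.2]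
  have hδ0 : 0 < δ := by positivity
  have hK : IsCompact (Icc a b ×ˢ Icc (0 : ℝ) 1) := isCompact_Icc.prod isCompact_Icc
  obtain ⟨⟨τ, ξ⟩, hz, hmax⟩ := hK.exists_isMaxOn (f := fun z => f z - δ * (z.1 - a))
    ⟨(t, 0), ht, by simp⟩ (fun z hz =>
      ((hf z hz.1.1 hz.1.2).continuousAt.sub (by fun_prop)).continuousWithinAt)
  have hmax' : ∀ s ∈ Icc a b, ∀ y, f (s, y) - δ * (s - a) ≤ f (τ, ξ) - δ * (τ - a) := by
    intro s hs y
    obtain ⟨y', hy', h⟩ := periodic_fract hper s y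
    rw [h]
    exact hmax (a := (s, y')) ⟨hs, hy'⟩
  have hτ := hz.1
  simp only at hτ
  have hfz := hf (τ, ξ) hτ.1 hτ.2
  rcases hτ.1.eq_or_lt with h0 | h0
  · have h1 := hmax' t ht x
    have h2 := hB ξ
    rw [← h0] at h1
    have h3 : δ * (t - a) ≤ ε := by
      rw [hδ, div_mul_eq_mul_div, div_le_iff₀ hab]
      nlinarith [ht.2]
    linarith
  · exfalso
    have hx0 : fx (τ, ξ) = 0 := by
      refine IsLocalMax.hasDerivAt_eq_zero (f := fun y => f (τ, y)) (a := ξ) ?_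
        (hasDerivAt_snd hfz)
      exact Eventually.of_forall fun y => by linarith [hmax' τ hτ y]
    have ht0 : HasDerivAt (fun s => f (s, ξ) - δ * (s - a)) (c (τ, ξ) * fx (τ, ξ) - δ * 1) τ :=
      (hasDerivAt_fst hfz).sub (((hasDerivAt_id τ).sub_const a).const_mul δ)
    rw [hx0] at ht0
    have hneg : c (τ, ξ) * 0 - δ * 1 < 0 := by linarith
    have h6 : ∀ᶠ s in 𝓝[<] τ, slope (fun s => f (s, ξ) - δ * (s - a)) τ s < 0 :=
      ((hasDerivAt_iff_tendsto_slope.1 ht0).mono_left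
        (nhdsWithin_mono _ fun s hs => ne_of_lt hs)).eventually (gt_mem_nhds hneg)
    obtain ⟨s, h7, hs⟩ := (h6.and (Ioo_mem_nhdsLT h0)).exists
    rw [slope_def_field] at h7
    have := hmax' s ⟨hs.1.le, hs.2.le.trans hτ.2⟩ ξ
    have h5 : s - τ < 0 := by linarith [hs.2]
    rw [div_lt_iff_of_neg h5] at h7
    linarith

/-- Second-order necessary condition at a local maximum. -/
lemma second_deriv_nonpos {f f' : ℝ → ℝ} {c x : ℝ} (hf : ∀ᶠ y in 𝓝 x, HasDerivAt f (f' y) y)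
    (hf' : HasDerivAt f' c x) (hmax : IsLocalMax f x) : c ≤ 0 := by
  by_contra hc
  push Not at hc
  have hd : deriv f =ᶠ[𝓝 x] f' := hf.mono fun y hy => hy.deriv
  have h2 : deriv (deriv f) x = c := by rw [hd.deriv_eq, hf'.deriv]
  have hmin := isLocalMin_of_deriv_deriv_pos (f := f) (x₀ := x) (by rw [h2]; exact hc)
    hmax.deriv_eq_zero hf.self_of_nhds.continuousAt
  have hconst : f =ᶠ[𝓝 x] fun _ => f x := by
    filter_upwards [hmax, hmin] with y h3 h4 using le_antisymm h3 h4
  have : deriv (deriv f) x = 0 := by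
    rw [hconst.deriv.deriv_eq]
    simp
  linarith

/-! ### Riemann invariants -/

namespace Sol

variable {p : ℝ → ℝ} {t₀ : ℝ} {u v α β αx βx : ℝ × ℝ → ℝ}

/-- The reflection `x ↦ -x`, `v ↦ -v` is a symmetry of the system; it exchanges the two families
of characteristics. -/
lemma reflect (S : Sol p t₀ u v α β αx βx) :
    Sol p t₀ (fun z => u (z.1, -z.2)) (fun z => -v (z.1, -z.2)) (fun z => -α (z.1, -z.2))
      (fun z => β (z.1, -z.2)) (fun z => αx (z.1, -z.2)) (fun z => -βx (z.1, -z.2)) := by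
  have key : ∀ (f : ℝ × ℝ → ℝ) (a b : ℝ) (z : ℝ × ℝ), HasFDerivAt f (pd a b) (z.1, -z.2) →
      HasFDerivAt (fun z : ℝ × ℝ => f (z.1, -z.2)) (pd a (-b)) z := by
    intro f a b z hf
    have h1 : HasFDerivAt (fun z : ℝ × ℝ => (z.1, -z.2))
        ((ContinuousLinearMap.fst ℝ ℝ ℝ).prod (-ContinuousLinearMap.snd ℝ ℝ ℝ)) z :=
      hasFDerivAt_fst.prodMk hasFDerivAt_snd.neg
    have h2 := HasFDerivAt.comp z hf h1
    refine h2.congr_fderiv ?_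
    ext <;> simp
  have kneg : ∀ a b : ℝ, -pd a b = pd (-a) (-b) := by
    intro a b; ext <;> simp
  have kper : ∀ f : ℝ × ℝ → ℝ, (∀ t x : ℝ, f (t, x + 1) = f (t, x)) →
      ∀ t x : ℝ, f (t, -(x + 1)) = f (t, -x) := by
    intro f hf t x
    rw [← hf t (-(x + 1))]
    congr 2; ring
  constructor
  · intro z hz
    exact key _ _ _ z (S.hu (z.1, -z.2) hz)
  · intro z hz
    have := (key _ _ _ z (S.hv (z.1, -z.2) hz)).neg
    rw [kneg] at this
    convert! this using 2 <;> ring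
  · intro z hz
    have := (key _ _ _ z (S.hα (z.1, -z.2) hz)).neg
    rw [kneg] at this
    convert! this using 2
    ring
  · intro z hz
    have := key _ _ _ z (S.hβ (z.1, -z.2) hz)
    convert! this using 2; ring
  · exact kper u S.uper
  · intro t x; simp only [kper v S.vper]
  · intro t x; simp only [kper α S.αper]
  · exact kper β S.βper

/-- The Riemann invariant `v + q(u)` satisfies `rₜ = λ rₓ` where `u ≤ 0`. -/
lemma hasFDerivAt_r (S : Sol p t₀ u v α β αx βx) (h : Law p) {z : ℝ × ℝ} (hz : t₀ < z.1)
    (hneg : u z ≤ 0) : HasFDerivAt (fun z => v z + qfun p (u z))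
      (pd (lam p (u z) * (β z - lam p (u z) * α z)) (β z - lam p (u z) * α z)) z := by
  have h1 := (S.hv z hz).add ((h.hasDerivAt_qfun (u z)).comp_hasFDerivAt z (S.hu z hz))
  refine h1.congr_fderiv ?_
  have h2 := h.lam_sq hneg
  ext
  · simp
    linear_combination α z * h2
  · simp
    ring

/-- The Riemann invariant `v - q(u)` satisfies `sₜ = -λ sₓ` where `u ≤ 0`. -/
lemma hasFDerivAt_s (S : Sol p t₀ u v α β αx βx) (h : Law p) {z : ℝ × ℝ} (hz : t₀ < z.1)
    (hneg : u z ≤ 0) : HasFDerivAt (fun z => v z - qfun p (u z))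
      (pd (-lam p (u z) * (β z + lam p (u z) * α z)) (β z + lam p (u z) * α z)) z := by
  have h1 := (S.hv z hz).sub ((h.hasDerivAt_qfun (u z)).comp_hasFDerivAt z (S.hu z hz))
  refine h1.congr_fderiv ?_
  have h2 := h.lam_sq hneg
  ext
  · simp
    linear_combination α z * h2
  · simp

/-- While `u ≤ 0`, the Riemann invariants stay within the range of their initial values. -/
lemma r_le (S : Sol p t₀ u v α β αx βx) (h : Law p) {t₁ T B : ℝ} (ht₁ : t₀ < t₁)
    (hneg : ∀ t ∈ Icc t₁ T, ∀ x, u (t, x) ≤ 0)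
    (hB : ∀ x, v (t₁, x) + qfun p (u (t₁, x)) ≤ B) :
    ∀ t ∈ Icc t₁ T, ∀ x, v (t, x) + qfun p (u (t, x)) ≤ B :=
  transport_max (f := fun z => v z + qfun p (u z))
    (fx := fun z => β z - lam p (u z) * α z) (c := fun z => lam p (u z))
    (fun t x => by simp only [S.uper, S.vper])
    (fun z h1 h2 => S.hasFDerivAt_r h (by linarith) (hneg z.1 ⟨h1, h2⟩ z.2)) hB

lemma le_r (S : Sol p t₀ u v α β αx βx) (h : Law p) {t₁ T B : ℝ} (ht₁ : t₀ < t₁)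
    (hneg : ∀ t ∈ Icc t₁ T, ∀ x, u (t, x) ≤ 0)
    (hB : ∀ x, B ≤ v (t₁, x) + qfun p (u (t₁, x))) :
    ∀ t ∈ Icc t₁ T, ∀ x, B ≤ v (t, x) + qfun p (u (t, x)) := by
  intro t ht x
  refine neg_le_neg_iff.1 (transport_max (f := fun z => -(v z + qfun p (u z)))
    (fx := fun z => -(β z - lam p (u z) * α z)) (c := fun z => lam p (u z)) (B := -B)
    (fun t x => by simp only [S.uper, S.vper])
    (fun z h1 h2 => ?_) (fun x => neg_le_neg (hB x)) t ht x)
  refine (S.hasFDerivAt_r h (by linarith) (hneg z.1 ⟨h1, h2⟩ z.2)).neg.congr_fderiv ?_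
  ext
  · simp
    ring
  · simp

lemma s_le (S : Sol p t₀ u v α β αx βx) (h : Law p) {t₁ T B : ℝ} (ht₁ : t₀ < t₁)
    (hneg : ∀ t ∈ Icc t₁ T, ∀ x, u (t, x) ≤ 0)
    (hB : ∀ x, v (t₁, x) - qfun p (u (t₁, x)) ≤ B) :
    ∀ t ∈ Icc t₁ T, ∀ x, v (t, x) - qfun p (u (t, x)) ≤ B :=
  transport_max (f := fun z => v z - qfun p (u z))
    (fx := fun z => β z + lam p (u z) * α z) (c := fun z => -lam p (u z))
    (fun t x => by simp only [S.uper, S.vper])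
    (fun z h1 h2 => S.hasFDerivAt_s h (by linarith) (hneg z.1 ⟨h1, h2⟩ z.2)) hB

lemma le_s (S : Sol p t₀ u v α β αx βx) (h : Law p) {t₁ T B : ℝ} (ht₁ : t₀ < t₁)
    (hneg : ∀ t ∈ Icc t₁ T, ∀ x, u (t, x) ≤ 0)
    (hB : ∀ x, B ≤ v (t₁, x) - qfun p (u (t₁, x))) :
    ∀ t ∈ Icc t₁ T, ∀ x, B ≤ v (t, x) - qfun p (u (t, x)) := by
  intro t ht x
  refine neg_le_neg_iff.1 (transport_max (f := fun z => -(v z - qfun p (u z)))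
    (fx := fun z => -(β z + lam p (u z) * α z)) (c := fun z => -lam p (u z)) (B := -B)
    (fun t x => by simp only [S.uper, S.vper])
    (fun z h1 h2 => ?_) (fun x => neg_le_neg (hB x)) t ht x)
  refine (S.hasFDerivAt_s h (by linarith) (hneg z.1 ⟨h1, h2⟩ z.2)).neg.congr_fderiv ?_
  ext
  · simp
    ring
  · simp

/-! ### Characteristics -/

/-- Integral curves of the field `-√(max(-p'(u), ε))`. The cut-off at `ε > 0` makes the field
globally Lipschitz in `x`, so that the curves exist on every time interval. -/
lemma exists_cutoff_curve (S : Sol p t₀ u v α β αx βx) (h : Law p) {t₁ T ε : ℝ} (ht₁ : t₀ < t₁)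
    (hT : t₁ ≤ T) (hε : 0 < ε) (x₀ : ℝ) : ∃ γ : ℝ → ℝ, γ t₁ = x₀ ∧ ∀ t ∈ Icc t₁ T,
      HasDerivAt γ (-√(max (-deriv p (u (t, γ t))) ε)) t := by
  have hmid : t₀ < (t₀ + t₁) / 2 := by linarith
  have hcu : ∀ z : ℝ × ℝ, (t₀ + t₁) / 2 ≤ z.1 → ContinuousAt u z := fun z hz =>
    (S.hu z (by linarith)).continuousAt
  have hcα : ∀ z : ℝ × ℝ, (t₀ + t₁) / 2 ≤ z.1 → ContinuousAt α z := fun z hz =>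
    (S.hα z (by linarith)).continuousAt
  obtain ⟨C₁, hC₁, hb₁⟩ := periodic_bounded (f := fun z => √(max (-deriv p (u z)) ε))
    (a := (t₀ + t₁) / 2) (b := T + 1) (fun t x => by simp only [S.uper])
    (fun z hz => (((h.continuous'.continuousAt.comp (hcu z hz)).neg).max
      continuousAt_const).sqrt)
  obtain ⟨C₂, hC₂, hb₂⟩ := periodic_bounded (f := fun z => deriv (deriv p) (u z) * α z)
    (a := (t₀ + t₁) / 2) (b := T + 1) (fun t x => by simp only [S.uper, S.αper])
    (fun z hz => (h.continuous''.continuousAt.comp (hcu z hz)).mul (hcα z hz))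
  have hse : 0 < √ε := Real.sqrt_pos.2 hε
  have hlip : ∀ t ∈ Icc ((t₀ + t₁) / 2) (T + 1), ∀ x y,
      |√(max (-deriv p (u (t, x))) ε) - √(max (-deriv p (u (t, y))) ε)| ≤
        C₂ / √ε * |x - y| := by
    intro t ht x y
    have h1 : |(-deriv p (u (t, x))) - (-deriv p (u (t, y)))| ≤ C₂ * |x - y| := by
      have hd : ∀ y, HasDerivAt (fun y => deriv p (u (t, y)))
          (deriv (deriv p) (u (t, y)) * α (t, y)) y := fun y =>
        HasDerivAt.comp (h₂ := deriv p) y (h.hasDerivAt' (u (t, y)))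
          (hasDerivAt_snd (S.hu (t, y) (by simp only; linarith [ht.1])))
      have := Convex.norm_image_sub_le_of_norm_hasDerivWithin_le (s := univ)
        (fun y _ => (hd y).hasDerivWithinAt) (fun y _ => hb₂ t ht y) convex_univ
        (mem_univ x) (mem_univ y)
      rw [Real.norm_eq_abs, Real.norm_eq_abs] at this
      rw [abs_sub_comm x y]
      convert this using 2; ring
    have h2 := (abs_max_sub_max_le_abs (-deriv p (u (t, x))) (-deriv p (u (t, y))) ε).trans h1
    have hA := le_max_right (-deriv p (u (t, x))) ε
    have hB := le_max_right (-deriv p (u (t, y))) ε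
    generalize max (-deriv p (u (t, x))) ε = A at h2 hA ⊢
    generalize max (-deriv p (u (t, y))) ε = B at h2 hB ⊢
    have hsA := Real.sqrt_le_sqrt hA
    have hsB := Real.sqrt_le_sqrt hB
    rw [div_mul_eq_mul_div, le_div_iff₀ hse]
    have h3 : A - B = (√A - √B) * (√A + √B) := by
      ring_nf; rw [Real.sq_sqrt (by linarith), Real.sq_sqrt (by linarith)]
    rw [h3, abs_mul, abs_of_pos (show 0 < √A + √B by linarith)] at h2
    refine le_trans ?_ h2
    gcongr
    linarith
  have hmem : t₁ ∈ Icc ((t₀ + t₁) / 2) (T + 1) := ⟨by linarith, by linarith⟩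
  have hPL : IsPicardLindelof (fun t x => -√(max (-deriv p (u (t, x))) ε))
      (⟨t₁, hmem⟩ : Icc ((t₀ + t₁) / 2) (T + 1)) x₀
      (C₁.toNNReal * Real.toNNReal (max (T + 1 - t₁) (t₁ - (t₀ + t₁) / 2))) 0
      C₁.toNNReal (C₂ / √ε).toNNReal := by
    constructor
    · intro t ht
      refine LipschitzOnWith.of_dist_le_mul fun x _ y _ => ?_
      rw [Real.dist_eq, Real.dist_eq, Real.coe_toNNReal _ (by positivity)]
      have := hlip t ht x y
      rw [← abs_neg] at this
      convert this using 2
      ring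
    · intro x _ t ht
      have hc : ContinuousAt u (t, x) := hcu _ ht.1
      have hc' : ContinuousAt (fun s => u (s, x)) t :=
        ContinuousAt.comp (f := fun s => (s, x)) hc (by fun_prop)
      have hc'' : ContinuousAt (fun s => -√(max (-deriv p (u (s, x))) ε)) t :=
        (((h.continuous'.continuousAt.comp hc').neg).max continuousAt_const).sqrt.neg
      exact hc''.continuousWithinAt
    · intro t ht x _
      rw [norm_neg, Real.coe_toNNReal _ hC₁.le]
      exact hb₁ t ht x
    · simp only [NNReal.coe_mul, NNReal.coe_zero, sub_zero]
      rw [Real.coe_toNNReal _ hC₁.le, Real.coe_toNNReal _ (le_max_of_le_left (by linarith))]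
  obtain ⟨γ, hγ0, hγ⟩ := hPL.exists_eq_forall_mem_Icc_hasDerivWithinAt₀
  exact ⟨γ, hγ0, fun t ht => (hγ t ⟨by linarith [ht.1], by linarith [ht.2]⟩).hasDerivAt
    (Icc_mem_nhds (by linarith [ht.1]) (by linarith [ht.2]))⟩

/-- Lax's Riccati equation `w' = p''/(4 λ^{5/2}) w²` for `w = √λ rₓ` along the characteristics
`x' = -λ`. -/
lemma riccati (S : Sol p t₀ u v α β αx βx) (h : Law p) {γ : ℝ → ℝ} {t : ℝ} (ht : t₀ < t)
    (hneg : u (t, γ t) < 0) (hγ : HasDerivAt γ (-lam p (u (t, γ t))) t) :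
    HasDerivAt (fun s => √(lam p (u (s, γ s))) *
        (β (s, γ s) - lam p (u (s, γ s)) * α (s, γ s)))
      (deriv (deriv p) (u (t, γ t)) / (4 * lam p (u (t, γ t)) ^ 2 * √(lam p (u (t, γ t)))) *
        (√(lam p (u (t, γ t))) *
          (β (t, γ t) - lam p (u (t, γ t)) * α (t, γ t))) ^ 2) t := by
  have hU := hasDerivAt_comp_curve (S.hu (t, γ t) ht) hγ
  have hA := hasDerivAt_comp_curve (S.hα (t, γ t) ht) hγ
  have hB := hasDerivAt_comp_curve (S.hβ (t, γ t) ht) hγ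
  have hl := h.lam_pos hneg
  have hl2 := h.lam_sq hneg.le
  have hL : HasDerivAt (fun s => lam p (u (s, γ s))) _ t :=
    (HasDerivAt.comp (h₂ := deriv p) t (h.hasDerivAt' _) hU).neg.sqrt
      (by simp only [Pi.neg_apply, Function.comp]; linarith [h.deriv_neg hneg])
  have hW := (hL.sqrt hl.ne').mul (hB.sub (hL.mul hA))
  refine hW.congr_deriv ?_
  have hs2 : √(lam p (u (t, γ t))) ^ 2 = lam p (u (t, γ t)) := Real.sq_sqrt hl.le
  have hs : 0 < √(lam p (u (t, γ t))) := Real.sqrt_pos.2 hl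
  have hdp : deriv p (u (t, γ t)) = -lam p (u (t, γ t)) ^ 2 := by linarith
  have e : √((-deriv p ∘ fun s => u (s, γ s)) t) = lam p (u (t, γ t)) := rfl
  simp only [Pi.sub_apply, Pi.mul_apply]
  rw [e, hdp]
  generalize √(lam p (u (t, γ t))) = σ at *
  generalize lam p (u (t, γ t)) = l at *
  subst hs2
  field_simp
  ring

/-- A characteristic `x' = -λ` starting where `rₓ > 0` never leaves the hyperbolic region:
`w = √λ rₓ` increases along it, while `w` would have to vanish at `u = 0`. The Riccati equation
moreover forces it to travel to the left with average speed at least `λ(-M)`, up to an error `C`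
that does not depend on the time `T`. -/
lemma exists_char (S : Sol p t₀ u v α β αx βx) (h : Law p) {t₁ M W : ℝ} (ht₁ : t₀ < t₁)
    (hM : 0 < M) (hW : 0 < W) : ∃ C, ∀ T, t₁ ≤ T → ∀ x₀, u (t₁, x₀) < 0 →
      √(lam p (u (t₁, x₀))) * (β (t₁, x₀) - lam p (u (t₁, x₀)) * α (t₁, x₀)) = W →
      ∃ γ : ℝ → ℝ, γ t₁ = x₀ ∧ (∀ t ∈ Icc t₁ T, HasDerivAt γ (-lam p (u (t, γ t))) t ∧
        u (t, γ t) < 0) ∧ γ T ≤ x₀ - lam p (-M) * (T - t₁) + C := by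
  obtain ⟨c, hc, hric⟩ := h.exists_riccati hM
  refine ⟨1 / (c * W), fun T hT x₀ hneg₀ hW₀ => ?_⟩
  have hcu : ∀ z : ℝ × ℝ, t₁ ≤ z.1 → ContinuousAt u z := fun z hz =>
    (S.hu z (by linarith)).continuousAt
  obtain ⟨A, hA, hAα⟩ := periodic_bounded (a := t₁) (b := T) S.αper
    (fun z hz => (S.hα z (by linarith)).continuousAt)
  obtain ⟨B, hB, hBβ⟩ := periodic_bounded (a := t₁) (b := T) S.βper
    (fun z hz => (S.hβ z (by linarith)).continuousAt)
  obtain ⟨L, hL, hLl⟩ := periodic_bounded (f := fun z => √(max (-deriv p (u z)) 1))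
    (a := t₁) (b := T) (fun t x => by simp only [S.uper])
    (fun z hz => (((h.continuous'.continuousAt.comp (hcu z hz)).neg).max
      continuousAt_const).sqrt)
  -- `w ≤ √λ (B + L A)`, so `w ≥ W` keeps `√λ` above `ρ`
  set ρ := W / (B + L * A) with hρ
  have hρ0 : 0 < ρ := by positivity
  set ε := min 1 (ρ ^ 4 / 2) with hε
  have hε0 : 0 < ε := by positivity
  have hε1 : ε ≤ 1 := min_le_left _ _
  have hερ : ε < ρ ^ 4 := lt_of_le_of_lt (min_le_right _ _) (by
    have : 0 < ρ ^ 4 := by positivity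
    linarith)
  have key : ∀ t ∈ Icc t₁ T, ∀ x l, 0 ≤ l → l ≤ √(max (-deriv p (u (t, x))) 1) →
      W ≤ √l * (β (t, x) - l * α (t, x)) → ρ ^ 4 ≤ l ^ 2 := by
    intro t ht x l hl0 hl hw
    have h1 : l ≤ L := hl.trans ((le_abs_self _).trans (hLl t ht x))
    have h2 : β (t, x) - l * α (t, x) ≤ B + L * A := by
      have h3 := (le_abs_self _).trans (hBβ t ht x)
      have h4 : |l * α (t, x)| ≤ L * A := by
        rw [abs_mul, abs_of_nonneg hl0]
        exact mul_le_mul h1 (hAα t ht x) (abs_nonneg _) hL.le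
      linarith [neg_abs_le (l * α (t, x))]
    have h5 : W ≤ √l * (B + L * A) := hw.trans (by gcongr)
    have h6 : ρ ≤ √l := by
      rw [hρ, div_le_iff₀ (by positivity)]; exact h5
    calc ρ ^ 4 ≤ √l ^ 4 := by gcongr
      _ = (√l ^ 2) ^ 2 := by ring
      _ = l ^ 2 := by rw [Real.sq_sqrt hl0]
  obtain ⟨γ, hγ0, hγ⟩ := S.exists_cutoff_curve h ht₁ hT hε0 x₀
  set l : ℝ → ℝ := fun t => √(max (-deriv p (u (t, γ t))) ε) with hl
  set w : ℝ → ℝ := fun t => √(l t) * (β (t, γ t) - l t * α (t, γ t)) with hw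
  have hlam : ∀ t, ε ≤ -deriv p (u (t, γ t)) → l t = lam p (u (t, γ t)) := by
    intro t ht
    simp only [hl]
    rw [max_eq_left ht, lam]
  have hreg : ∀ t ∈ Icc t₁ T, W ≤ w t → ε < -deriv p (u (t, γ t)) := by
    intro t ht hwt
    have h1 := key t ht (γ t) (l t) (Real.sqrt_nonneg _)
      (Real.sqrt_le_sqrt (max_le_max le_rfl hε1)) hwt
    rw [hl, Real.sq_sqrt (by positivity)] at h1
    have := hερ.trans_le h1
    rcases lt_max_iff.1 this with h2 | h2
    · exact h2
    · exact absurd h2 (lt_irrefl _)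
  have hcγ : ∀ t ∈ Icc t₁ T, ContinuousAt (fun s => (s, γ s)) t := fun t ht =>
    continuousAt_id.prodMk (hγ t ht).continuousAt
  have hcuγ : ∀ t ∈ Icc t₁ T, ContinuousAt (fun s => -deriv p (u (s, γ s))) t := fun t ht =>
    (h.continuous'.continuousAt.comp (ContinuousAt.comp (f := fun s => (s, γ s))
      (hcu (t, γ t) ht.1) (hcγ t ht))).neg
  have hneg : ∀ t ∈ Icc t₁ T, W ≤ w t → u (t, γ t) < 0 := by
    intro t ht hwt
    have h1 := hreg t ht hwt
    exact h.neg_of_lam_pos (Real.sqrt_pos.2 (hε0.trans h1))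
  have hd : ∀ t ∈ Icc t₁ T, W ≤ w t → HasDerivAt w (deriv (deriv p) (u (t, γ t)) /
      (4 * lam p (u (t, γ t)) ^ 2 * √(lam p (u (t, γ t)))) * (w t) ^ 2) t := by
    intro t ht hwt
    have h1 := hreg t ht hwt
    have h2 := hγ t ht
    have h3 : HasDerivAt γ (-lam p (u (t, γ t))) t := by
      rw [← hlam t h1.le]; exact h2
    have h4 := S.riccati h (by linarith [ht.1]) (hneg t ht hwt) h3
    have h5 : w t = √(lam p (u (t, γ t))) *
          (β (t, γ t) - lam p (u (t, γ t)) * α (t, γ t)) := by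
      simp only [hw]; rw [hlam t h1.le]
    rw [h5]
    refine h4.congr_of_eventuallyEq ?_
    filter_upwards [(hcuγ t ht).eventually (lt_mem_nhds h1)] with s hs
    simp only [hw]
    rw [hlam s hs.le]
  have hwc : ContinuousOn w (Icc t₁ T) := by
    intro t ht
    have hlc : ContinuousAt l t := ((hcuγ t ht).max continuousAt_const).sqrt
    have hβc : ContinuousAt (fun s => β (s, γ s)) t :=
      ContinuousAt.comp (f := fun s => (s, γ s))
        (S.hβ (t, γ t) (by simp only; linarith [ht.1])).continuousAt (hcγ t ht)
    have hαc : ContinuousAt (fun s => α (s, γ s)) t :=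
      ContinuousAt.comp (f := fun s => (s, γ s))
        (S.hα (t, γ t) (by simp only; linarith [ht.1])).continuousAt (hcγ t ht)
    exact (hlc.sqrt.mul (hβc.sub (hlc.mul hαc))).continuousWithinAt
  have hwt₁ : w t₁ = W := by
    have h1 : W ≤ √(lam p (u (t₁, x₀))) *
        (β (t₁, x₀) - lam p (u (t₁, x₀)) * α (t₁, x₀)) := hW₀.ge
    have h2 := key t₁ ⟨le_rfl, hT⟩ x₀ _ (Real.sqrt_nonneg _)
      (Real.sqrt_le_sqrt (le_max_left _ _)) h1
    change ρ ^ 4 ≤ lam p (u (t₁, x₀)) ^ 2 at h2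
    rw [h.lam_sq hneg₀.le] at h2
    simp only [hw]
    rw [hlam t₁ (by rw [hγ0]; linarith), hγ0, hW₀]
  have hpos : ∀ t ∈ Icc t₁ T, W ≤ w t → 0 < deriv (deriv p) (u (t, γ t)) /
      (4 * lam p (u (t, γ t)) ^ 2 * √(lam p (u (t, γ t)))) := by
    intro t ht hwt
    have h1 := h.lam_pos (hneg t ht hwt)
    have h2 := h.conv (u (t, γ t))
    have h3 := Real.sqrt_pos.2 h1
    positivity
  have hall : Icc t₁ T ⊆ {t | W ≤ w t} := by
    refine IsClosed.Icc_subset_of_forall_mem_nhdsWithin ?_ hwt₁.ge ?_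
    · have := hwc.preimage_isClosed_of_isClosed isClosed_Icc (isClosed_Ici (a := W))
      rwa [inter_comm] at this
    · rintro t ⟨hwt, ht⟩
      have ht' := Ico_subset_Icc_self ht
      have h1 := hd t ht' hwt
      have h2 : 0 < deriv (deriv p) (u (t, γ t)) /
          (4 * lam p (u (t, γ t)) ^ 2 * √(lam p (u (t, γ t)))) * (w t) ^ 2 :=
        mul_pos (hpos t ht' hwt) (pow_pos (hW.trans_le hwt) 2)
      have h3 : ∀ᶠ s in 𝓝[>] t, 0 < slope w t s :=
        ((hasDerivAt_iff_tendsto_slope.1 h1).mono_left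
          (nhdsWithin_mono _ fun s hs => ne_of_gt hs)).eventually (lt_mem_nhds h2)
      filter_upwards [h3, self_mem_nhdsWithin] with s hs hts
      rw [slope_def_field] at hs
      have h4 : 0 < s - t := sub_pos.2 hts
      have h5 := (div_pos_iff_of_pos_right h4).1 hs
      have h6 : W ≤ w t := hwt
      change W ≤ w s
      linarith
  have hγ' : ∀ t ∈ Icc t₁ T, HasDerivAt γ (-lam p (u (t, γ t))) t := by
    intro t ht
    rw [← hlam t (hreg t ht (hall ht)).le]; exact hγ t ht
  refine ⟨γ, hγ0, fun t ht => ⟨hγ' t ht, hneg t ht (hall ht)⟩, ?_⟩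
  -- `-1/w - c (λ(-M) t + γ)` is nondecreasing by the lower bound on the Riccati coefficient
  have hG : ∀ t ∈ Icc t₁ T, HasDerivAt (fun t => -(w t)⁻¹ - c * (lam p (-M) * t + γ t))
      (deriv (deriv p) (u (t, γ t)) / (4 * lam p (u (t, γ t)) ^ 2 * √(lam p (u (t, γ t)))) -
        c * (lam p (-M) - lam p (u (t, γ t)))) t := by
    intro t ht
    have hw0 : w t ≠ 0 := (hW.trans_le (hall ht)).ne'
    refine (((hd t ht (hall ht)).inv hw0).neg.sub
      ((((hasDerivAt_id t).const_mul _).add (hγ' t ht)).const_mul c)).congr_deriv ?_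
    field_simp
    ring
  have hmono : MonotoneOn (fun t => -(w t)⁻¹ - c * (lam p (-M) * t + γ t)) (Icc t₁ T) := by
    refine monotoneOn_of_deriv_nonneg (convex_Icc _ _)
      (fun t ht => (hG t ht).continuousAt.continuousWithinAt)
      (fun t ht => (hG t (interior_subset ht)).differentiableAt.differentiableWithinAt) ?_
    intro t ht
    have ht' := interior_subset ht
    rw [(hG t ht').deriv]
    linarith [hric _ (hneg t ht' (hall ht'))]
  have h1 := hmono ⟨le_rfl, hT⟩ ⟨hT, le_rfl⟩ hT
  simp only [hwt₁, hγ0] at h1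
  have h2 : 0 < (w T)⁻¹ := inv_pos.2 (hW.trans_le (hall ⟨hT, le_rfl⟩))
  have h3 : c * (γ T - x₀ + lam p (-M) * (T - t₁)) ≤ W⁻¹ := by nlinarith
  have h4 : γ T - x₀ + lam p (-M) * (T - t₁) ≤ 1 / (c * W) := by
    rw [le_div_iff₀ (by positivity)]
    calc _ = c * (γ T - x₀ + lam p (-M) * (T - t₁)) * W := by ring
      _ ≤ W⁻¹ * W := by gcongr
      _ = 1 := inv_mul_cancel₀ hW.ne'
  linarith

/-! ### Absence of elliptic points -/

/-- A curve of slope at least `-L`. -/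
lemma curve_lower {γ γ' : ℝ → ℝ} {a b L : ℝ} (hab : a ≤ b)
    (hγ : ∀ t ∈ Icc a b, HasDerivAt γ (γ' t) t) (hL : ∀ t ∈ Icc a b, -L ≤ γ' t) :
    γ a - L * (b - a) ≤ γ b := by
  have hG : ∀ t ∈ Icc a b, HasDerivAt (fun t => γ t + L * t) (γ' t + L * 1) t := fun t ht =>
    (hγ t ht).add ((hasDerivAt_id t).const_mul L)
  have hmono : MonotoneOn (fun t => γ t + L * t) (Icc a b) := by
    refine monotoneOn_of_deriv_nonneg (convex_Icc _ _)
      (fun t ht => (hG t ht).continuousAt.continuousWithinAt)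
      (fun t ht => (hG t (interior_subset ht)).differentiableAt.differentiableWithinAt) ?_
    intro t ht
    rw [(hG t (interior_subset ht)).deriv]
    linarith [hL t (interior_subset ht)]
  have := hmono ⟨le_rfl, hab⟩ ⟨hab, le_rfl⟩ hab
  simp only at this
  linarith

lemma periodic_nat {f : ℝ × ℝ → ℝ} (hf : ∀ t x : ℝ, f (t, x + 1) = f (t, x)) (n : ℕ)
    (t x : ℝ) : f (t, x + n) = f (t, x) := by
  induction n with
  | zero => simp
  | succ k ih => rw [Nat.cast_succ, ← add_assoc, hf, ih]

/-- Elliptic maximum principle. A region of the half-plane enclosed by the initial line and two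
curves on which `u < 0`, and which is empty at time `T`, contains no point with `u > 0`. -/
lemma no_elliptic (S : Sol p t₀ u v α β αx βx) (h : Law p) {t₁ T : ℝ} (ht₁ : t₀ < t₁)
    (hneg₀ : ∀ x, u (t₁, x) < 0) {γ σ : ℝ → ℝ}
    (hcγ : ∀ t ∈ Icc t₁ T, ContinuousAt γ t) (hcσ : ∀ t ∈ Icc t₁ T, ContinuousAt σ t)
    (hγ : ∀ t ∈ Icc t₁ T, u (t, γ t) < 0) (hσ : ∀ t ∈ Icc t₁ T, u (t, σ t) < 0)
    (hend : γ T < σ T) {t x : ℝ} (ht : t ∈ Icc t₁ T) (hx : x ∈ Icc (σ t) (γ t)) :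
    u (t, x) ≤ 0 := by
  by_contra hpos
  push Not at hpos
  have hcγ' : ContinuousOn γ (Icc t₁ T) := fun s hs => (hcγ s hs).continuousWithinAt
  have hcσ' : ContinuousOn σ (Icc t₁ T) := fun s hs => (hcσ s hs).continuousWithinAt
  obtain ⟨Bγ, hBγ⟩ := isCompact_Icc.exists_bound_of_continuousOn hcγ'
  obtain ⟨Bσ, hBσ⟩ := isCompact_Icc.exists_bound_of_continuousOn hcσ'
  -- the enclosed region, written inside a rectangle
  have hrect : IsCompact (Icc t₁ T ×ˢ Icc (-Bσ) Bγ) := isCompact_Icc.prod isCompact_Icc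
  set F : ℝ × ℝ → ℝ := fun z => min (z.2 - σ z.1) (γ z.1 - z.2) with hF
  have hFc : ContinuousOn F (Icc t₁ T ×ˢ Icc (-Bσ) Bγ) := by
    have h1 : ContinuousOn (fun z : ℝ × ℝ => σ z.1) (Icc t₁ T ×ˢ Icc (-Bσ) Bγ) :=
      hcσ'.comp continuousOn_fst fun z hz => hz.1
    have h2 : ContinuousOn (fun z : ℝ × ℝ => γ z.1) (Icc t₁ T ×ˢ Icc (-Bσ) Bγ) :=
      hcγ'.comp continuousOn_fst fun z hz => hz.1
    exact continuous_min.comp_continuousOn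
      ((continuousOn_snd.sub h1).prodMk (h2.sub continuousOn_snd))
  have hD : IsCompact ((Icc t₁ T ×ˢ Icc (-Bσ) Bγ) ∩ F ⁻¹' (Ici 0)) :=
    hrect.of_isClosed_subset
      (hFc.preimage_isClosed_of_isClosed hrect.isClosed isClosed_Ici) inter_subset_left
  have hmemD : ∀ s y, s ∈ Icc t₁ T → y ∈ Icc (σ s) (γ s) →
      (s, y) ∈ (Icc t₁ T ×ˢ Icc (-Bσ) Bγ) ∩ F ⁻¹' (Ici 0) := by
    intro s y hs hy
    have h1 := abs_le.1 (hBγ s hs)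
    have h2 := abs_le.1 (hBσ s hs)
    refine ⟨⟨hs, ⟨by simp only; linarith [hy.1], by simp only; linarith [hy.2]⟩⟩, ?_⟩
    simp only [hF, mem_preimage, mem_Ici, le_min_iff]
    exact ⟨by linarith [hy.1], by linarith [hy.2]⟩
  -- `δ t²` makes the maximum principle strict, with `δ` so small that the maximum has `u > 0`
  set δ := u (t, x) / (2 * ((T - t₁) ^ 2 + 1)) with hδ
  have hδ0 : 0 < δ := by positivity
  have hδ1 : δ * (T - t₁) ^ 2 < u (t, x) := by
    rw [hδ, div_mul_eq_mul_div, div_lt_iff₀ (by positivity)]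
    nlinarith [sq_nonneg (T - t₁)]
  obtain ⟨⟨τ, ξ⟩, hz, hmax⟩ := hD.exists_isMaxOn (f := fun z => u z + δ * (z.1 - t₁) ^ 2)
    ⟨(t, x), hmemD t x ht hx⟩ (fun z hz =>
      ((S.hu z (by linarith [hz.1.1.1])).continuousAt.add (by fun_prop)).continuousWithinAt)
  have hτ : τ ∈ Icc t₁ T := hz.1.1
  have hzF : 0 ≤ min (ξ - σ τ) (γ τ - ξ) := hz.2
  rw [le_min_iff] at hzF
  have hmax' : ∀ s y, s ∈ Icc t₁ T → y ∈ Icc (σ s) (γ s) →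
      u (s, y) + δ * (s - t₁) ^ 2 ≤ u (τ, ξ) + δ * (τ - t₁) ^ 2 := fun s y hs hy =>
    hmax (a := (s, y)) (hmemD s y hs hy)
  have hupos : 0 < u (τ, ξ) := by
    have h1 := hmax' t x ht hx
    have h2 : δ * (τ - t₁) ^ 2 ≤ δ * (T - t₁) ^ 2 := by
      have := hτ.1; have := hτ.2
      gcongr
    have h3 : 0 ≤ δ * (t - t₁) ^ 2 := by positivity
    linarith
  have h1 : t₁ < τ := by
    rcases hτ.1.eq_or_lt with h0 | h0
    · rw [← h0] at hupos; linarith [hneg₀ ξ]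
    · exact h0
  have h2 : τ < T := by
    rcases hτ.2.eq_or_lt with h0 | h0
    · rw [h0] at hzF; linarith [hzF.1, hzF.2]
    · exact h0
  have h3 : σ τ < ξ := by
    rcases hzF.1.eq_or_lt with h0 | h0
    · have : ξ = σ τ := by linarith
      rw [this] at hupos; linarith [hσ τ hτ]
    · linarith
  have h4 : ξ < γ τ := by
    rcases hzF.2.eq_or_lt with h0 | h0
    · have : ξ = γ τ := by linarith
      rw [this] at hupos; linarith [hγ τ hτ]
    · linarith
  have ht0 : t₀ < τ := by linarith
  -- test in the `x`-direction
  have hlx : IsLocalMax (fun y => u (τ, y)) ξ := by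
    filter_upwards [Ioo_mem_nhds h3 h4] with y hy
    linarith [hmax' τ y hτ ⟨hy.1.le, hy.2.le⟩]
  have hα0 : α (τ, ξ) = 0 := hlx.hasDerivAt_eq_zero (hasDerivAt_snd (S.hu (τ, ξ) ht0))
  have hxx : αx (τ, ξ) ≤ 0 :=
    second_deriv_nonpos (Eventually.of_forall fun y => hasDerivAt_snd (S.hu (τ, y) ht0))
      (hasDerivAt_snd (S.hα (τ, ξ) ht0)) hlx
  -- test in the `t`-direction
  have hlt : IsLocalMax (fun s => u (s, ξ) + δ * (s - t₁) ^ 2) τ := by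
    filter_upwards [Ioo_mem_nhds h1 h2, (hcσ τ hτ).eventually (gt_mem_nhds h3),
      (hcγ τ hτ).eventually (lt_mem_nhds h4)] with s hs hs1 hs2
    exact hmax' s ξ ⟨hs.1.le, hs.2.le⟩ ⟨hs1.le, hs2.le⟩
  have htt := second_deriv_nonpos (f' := fun s => -β (s, ξ) + δ * (2 * (s - t₁)))
    (by
      filter_upwards [lt_mem_nhds ht0] with s hs
      refine (hasDerivAt_fst (S.hu (s, ξ) hs)).add
        (((((hasDerivAt_id s).sub_const t₁).pow 2).const_mul δ).congr_deriv ?_)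
      simp)
    ((hasDerivAt_fst (S.hβ (τ, ξ) ht0)).neg.add
      ((((hasDerivAt_id τ).sub_const t₁).const_mul 2).const_mul δ)) hlt
  rw [hα0] at htt
  have h5 := h.deriv_pos hupos
  nlinarith

/-- If both Riemann invariants increase somewhere initially, then `u ≤ 0` forever: characteristics
of the two families, shifted by many periods, enclose any given point. -/
lemma nonpos_of_both (S : Sol p t₀ u v α β αx βx) (h : Law p) {t₁ : ℝ} (ht₁ : t₀ < t₁)
    (hneg₀ : ∀ x, u (t₁, x) < 0)
    (hr : ∃ x, 0 < β (t₁, x) - lam p (u (t₁, x)) * α (t₁, x))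
    (hs : ∃ x, 0 < β (t₁, x) + lam p (u (t₁, x)) * α (t₁, x)) :
    ∀ t, t₁ ≤ t → ∀ x, u (t, x) ≤ 0 := by
  intro t ht x
  obtain ⟨a, ha⟩ := hr
  obtain ⟨b, hb⟩ := hs
  have hK := h.lam_pos (w := -1) (by norm_num)
  obtain ⟨C, hC⟩ := S.exists_char h ht₁ one_pos
    (mul_pos (Real.sqrt_pos.2 (h.lam_pos (hneg₀ a))) ha)
  obtain ⟨C', hC'⟩ := S.reflect.exists_char h ht₁ one_pos
    (mul_pos (Real.sqrt_pos.2 (h.lam_pos (hneg₀ b))) hb)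
  obtain ⟨L, hL, hLl⟩ := periodic_bounded (f := fun z => lam p (u z))
    (a := t₁) (b := t) (fun t x => by simp only [S.uper])
    (fun z hz => h.continuous_lam.continuousAt.comp (S.hu z (by linarith)).continuousAt)
  obtain ⟨n, hn⟩ := exists_nat_ge (|x| + |a| + |b| + L * (t - t₁))
  have hxa := abs_le.1 (le_refl |x|)
  have haa := abs_le.1 (le_refl |a|)
  have hba := abs_le.1 (le_refl |b|)
  set Z := a + n + C + (-b + n) + C' with hZ
  set T := t + |Z| / lam p (-1) + 1 with hT
  have hZK : 0 ≤ |Z| / lam p (-1) := by positivity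
  have htT : t ≤ T := by linarith
  have hKT : |Z| < lam p (-1) * (T - t₁) := by
    have h1 : |Z| = lam p (-1) * (|Z| / lam p (-1)) := by field_simp
    have h2 : |Z| / lam p (-1) < T - t₁ := by linarith
    nlinarith
  have hbn : -(-b + (n : ℝ)) = b - n := by ring
  have hbp : ∀ f : ℝ × ℝ → ℝ, (∀ t x : ℝ, f (t, x + 1) = f (t, x)) →
      f (t₁, b - n) = f (t₁, b) := by
    intro f hf
    have := periodic_nat hf n t₁ (b - n)
    rwa [sub_add_cancel, eq_comm] at this
  obtain ⟨γ, hγ0, hγ, hγT⟩ := hC T (ht.trans htT) (a + n) (hneg₀ _) (by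
    rw [periodic_nat S.uper, periodic_nat S.αper, periodic_nat S.βper])
  obtain ⟨σ, hσ0, hσ, hσT⟩ := hC' T (ht.trans htT) (-b + n) (hneg₀ _) (by
    simp only [hbn, hbp u S.uper, hbp α S.αper, hbp β S.βper]
    ring)
  have hsub : ∀ s ∈ Icc t₁ t, s ∈ Icc t₁ T := fun s hs => ⟨hs.1, hs.2.trans htT⟩
  have hγt := curve_lower ht (fun s hs => (hγ s (hsub s hs)).1)
    (fun s hs => neg_le_neg ((le_abs_self _).trans (hLl s hs (γ s))))
  have hσt := curve_lower ht (fun s hs => (hσ s (hsub s hs)).1)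
    (fun s hs => neg_le_neg ((le_abs_self _).trans (hLl s hs (-σ s))))
  rw [hγ0] at hγt
  rw [hσ0] at hσt
  refine S.no_elliptic h ht₁ hneg₀ (γ := γ) (σ := fun s => -σ s) (T := T)
    (fun s hs => (hγ s hs).1.continuousAt) (fun s hs => (hσ s hs).1.continuousAt.neg)
    (fun s hs => (hγ s hs).2) (fun s hs => (hσ s hs).2) ?_ ⟨ht, htT⟩ ⟨?_, ?_⟩
  · have := le_abs_self Z
    have := abs_nonneg Z
    linarith
  · linarith
  · linarith

/-! ### Constancy -/

/-- If `u ≤ 0` forever, then the invariant `r = v + q(u)` is nonincreasing in `x` initially. Where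
it increased, the bounds on `r` and `s` would cap the speed of the characteristic below the speed
that the Riccati equation demands. -/
lemma rx_nonpos (S : Sol p t₀ u v α β αx βx) (h : Law p) {t₁ : ℝ} (ht₁ : t₀ < t₁)
    (hneg₀ : ∀ x, u (t₁, x) < 0) (hneg : ∀ t, t₁ ≤ t → ∀ x, u (t, x) ≤ 0) (a : ℝ) :
    β (t₁, a) - lam p (u (t₁, a)) * α (t₁, a) ≤ 0 := by
  by_contra ha
  push Not at ha
  have hcq : Continuous (qfun p) :=
    continuous_iff_continuousAt.2 fun w => (h.hasDerivAt_qfun w).continuousAt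
  have hcu : ∀ z : ℝ × ℝ, t₁ ≤ z.1 → ContinuousAt (fun z => qfun p (u z)) z := fun z hz =>
    hcq.continuousAt.comp (S.hu z (by linarith)).continuousAt
  have hcv : ∀ z : ℝ × ℝ, t₁ ≤ z.1 → ContinuousAt v z := fun z hz =>
    (S.hv z (by linarith)).continuousAt
  obtain ⟨B, -, hB⟩ := periodic_bounded (f := fun z => v z + qfun p (u z)) (a := t₁) (b := t₁)
    (fun t x => by simp only [S.uper, S.vper]) (fun z hz => (hcv z hz).add (hcu z hz))
  obtain ⟨B', -, hB'⟩ := periodic_bounded (f := fun z => v z - qfun p (u z)) (a := t₁) (b := t₁)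
    (fun t x => by simp only [S.uper, S.vper]) (fun z hz => (hcv z hz).sub (hcu z hz))
  obtain ⟨M, hM, hMu⟩ := h.exists_lower ((B + B') / 2)
  have hlow : ∀ t, t₁ ≤ t → ∀ x, -M ≤ u (t, x) := by
    intro t ht x
    have h1 := S.r_le h (T := t) ht₁ (fun s hs => hneg s hs.1)
      (fun x => (abs_le.1 (hB t₁ (by simp) x)).2) t ⟨ht, le_rfl⟩ x
    have h2 := S.le_s h (T := t) ht₁ (fun s hs => hneg s hs.1)
      (fun x => (abs_le.1 (hB' t₁ (by simp) x)).1) t ⟨ht, le_rfl⟩ x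
    exact hMu _ (by linarith)
  have hgap : lam p (-M) < lam p (-(M + 1)) := by
    refine Real.sqrt_lt_sqrt ?_ (neg_lt_neg (h.strictMono (by linarith)))
    linarith [h.deriv_nonpos (w := -M) (by linarith)]
  obtain ⟨C, hC⟩ := S.exists_char h ht₁ (M := M + 1) (by linarith)
    (mul_pos (Real.sqrt_pos.2 (h.lam_pos (hneg₀ a))) ha)
  set d := lam p (-(M + 1)) - lam p (-M) with hd
  have hd0 : 0 < d := by linarith
  set T := t₁ + |C| / d + 1 with hT
  have hCd : 0 ≤ |C| / d := by positivity
  have htT : t₁ ≤ T := by linarith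
  obtain ⟨γ, hγ0, hγ, hγT⟩ := hC T htT a (hneg₀ a) rfl
  have h1 := curve_lower htT (fun s hs => (hγ s hs).1)
    (fun s hs => neg_le_neg (h.antitone_lam (hlow s hs.1 (γ s))))
  rw [hγ0] at h1
  have h2 : |C| < d * (T - t₁) := by
    have h3 : |C| = d * (|C| / d) := by field_simp
    have h4 : |C| / d < T - t₁ := by linarith
    nlinarith
  have := le_abs_self C
  rw [hd] at h2
  linarith

/-- If `rₓ ≤ 0` initially, then `r` is initially constant, being periodic and monotone. -/
lemma r_const (S : Sol p t₀ u v α β αx βx) (h : Law p) {t₁ : ℝ} (ht₁ : t₀ < t₁)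
    (hneg₀ : ∀ x, u (t₁, x) < 0)
    (hrx : ∀ x, β (t₁, x) - lam p (u (t₁, x)) * α (t₁, x) ≤ 0) (x : ℝ) :
    v (t₁, x) + qfun p (u (t₁, x)) = v (t₁, 0) + qfun p (u (t₁, 0)) := by
  have hd : ∀ y, HasDerivAt (fun y => v (t₁, y) + qfun p (u (t₁, y)))
      (β (t₁, y) - lam p (u (t₁, y)) * α (t₁, y)) y := fun y =>
    hasDerivAt_snd (S.hasFDerivAt_r h (z := (t₁, y)) ht₁ (hneg₀ y).le)
  have hanti : Antitone (fun y => v (t₁, y) + qfun p (u (t₁, y))) :=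
    antitone_of_deriv_nonpos (fun y => (hd y).differentiableAt)
      (fun y => by rw [(hd y).deriv]; exact hrx y)
  obtain ⟨y, hy, he⟩ := periodic_fract (f := fun z => v z + qfun p (u z))
    (fun t x => by simp only [S.uper, S.vper]) t₁ x
  have h1 := hanti hy.1
  have h2 := hanti hy.2
  have hu1 := S.uper t₁ 0
  have hv1 := S.vper t₁ 0
  rw [zero_add] at hu1 hv1
  simp only [hu1, hv1] at h1 h2 he
  linarith

/-- If `r` is constant initially (a simple wave), then `q(u)` cannot decrease to zero, because
`s` stays below its initial maximum; hence `u ≤ 0` forever. -/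
lemma nonpos_of_r_const (S : Sol p t₀ u v α β αx βx) (h : Law p) {t₁ : ℝ} (ht₁ : t₀ < t₁)
    (hneg₀ : ∀ x, u (t₁, x) < 0)
    (hr : ∀ x, v (t₁, x) + qfun p (u (t₁, x)) = v (t₁, 0) + qfun p (u (t₁, 0))) :
    ∀ t, t₁ ≤ t → ∀ x, u (t, x) ≤ 0 := by
  intro t ht x
  by_contra hpos
  push Not at hpos
  have hcu : ∀ z : ℝ × ℝ, t₁ ≤ z.1 → ContinuousAt u z := fun z hz =>
    (S.hu z (by linarith)).continuousAt
  have hrect : IsCompact (Icc t₁ t ×ˢ Icc (0 : ℝ) 1) := isCompact_Icc.prod isCompact_Icc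
  have hD : IsCompact ((Icc t₁ t ×ˢ Icc (0 : ℝ) 1) ∩ u ⁻¹' (Ici 0)) :=
    hrect.of_isClosed_subset (ContinuousOn.preimage_isClosed_of_isClosed
      (fun z hz => (hcu z hz.1.1).continuousWithinAt) hrect.isClosed isClosed_Ici)
      inter_subset_left
  -- the first time `τ` at which `u` reaches zero
  obtain ⟨y₀, hy₀, he₀⟩ := periodic_fract S.uper t x
  obtain ⟨⟨τ, ξ⟩, hz, hmin⟩ := hD.exists_isMinOn (f := Prod.fst)
    ⟨(t, y₀), ⟨⟨⟨ht, le_rfl⟩, hy₀⟩, by simp only [mem_preimage, mem_Ici]; linarith⟩⟩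
    continuousOn_fst
  have hτ : τ ∈ Icc t₁ t := hz.1.1
  have huz : 0 ≤ u (τ, ξ) := hz.2
  have hlt : t₁ < τ := by
    rcases hτ.1.eq_or_lt with h0 | h0
    · rw [← h0] at huz; linarith [hneg₀ ξ]
    · exact h0
  have hbefore : ∀ s ∈ Ico t₁ τ, ∀ y, u (s, y) ≤ 0 := by
    intro s hs y
    by_contra hc
    push Not at hc
    obtain ⟨y', hy', he⟩ := periodic_fract S.uper s y
    have : τ ≤ s := hmin (a := (s, y'))
      ⟨⟨⟨hs.1, hs.2.le.trans hτ.2⟩, hy'⟩, by simp only [mem_preimage, mem_Ici]; linarith⟩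
    linarith [hs.2]
  have hneg : ∀ s ∈ Icc t₁ τ, ∀ y, u (s, y) ≤ 0 := by
    intro s hs y
    rcases hs.2.eq_or_lt with h0 | h0
    · subst h0
      have hc : ContinuousAt (fun s => u (s, y)) s :=
        (hasDerivAt_fst (S.hu (s, y) (by simp only; linarith))).continuousAt
      refine le_of_tendsto (hc.mono_left (nhdsWithin_le_nhds (s := Iio s))) ?_
      filter_upwards [Ioo_mem_nhdsLT hlt] with s' hs'
      exact hbefore s' ⟨hs'.1.le, hs'.2⟩ y
    · exact hbefore s ⟨hs.1, h0⟩ y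
  have hcs : ContinuousOn (fun y => v (t₁, y) - qfun p (u (t₁, y))) (Icc 0 1) := fun y _ =>
    (hasDerivAt_snd (S.hasFDerivAt_s h (z := (t₁, y)) ht₁
      (hneg₀ y).le)).continuousAt.continuousWithinAt
  obtain ⟨y, hy, hmax⟩ := isCompact_Icc.exists_isMaxOn ⟨0, by simp⟩ hcs
  have h1 := S.s_le h ht₁ hneg (B := v (t₁, y) - qfun p (u (t₁, y))) (fun x => by
    obtain ⟨x', hx', he⟩ := periodic_fract (f := fun z => v z - qfun p (u z))
      (fun t x => by simp only [S.uper, S.vper]) t₁ x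
    rw [he]
    exact hmax hx') τ ⟨hτ.1, le_rfl⟩ ξ
  have h2 := S.le_r h ht₁ hneg (fun x => (hr x).ge) τ ⟨hτ.1, le_rfl⟩ ξ
  have hu0 : u (τ, ξ) = 0 := le_antisymm (hneg τ ⟨hτ.1, le_rfl⟩ ξ) huz
  have h3 := h.qfun_strictAnti (a := u (t₁, y)) (b := 0) (hneg₀ y).le (by simp) (hneg₀ y)
  rw [hu0] at h1 h2
  rw [Law.qfun_zero] at h1 h2 h3
  have h4 := hr y
  linarith

/-- The conclusion from a time `t₁ > t₀` on. -/
lemma constant (S : Sol p t₀ u v α β αx βx) (h : Law p) {t₁ : ℝ} (ht₁ : t₀ < t₁)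
    (hneg₀ : ∀ x, u (t₁, x) < 0) :
    ∀ t, t₁ ≤ t → ∀ x, u (t, x) = u (t₁, 0) ∧ v (t, x) = v (t₁, 0) := by
  have hneg₀' : ∀ x, u (t₁, -x) < 0 := fun x => hneg₀ (-x)
  have hneg : ∀ t, t₁ ≤ t → ∀ x, u (t, x) ≤ 0 := by
    by_cases hr : ∃ x, 0 < β (t₁, x) - lam p (u (t₁, x)) * α (t₁, x)
    · by_cases hs : ∃ x, 0 < β (t₁, x) + lam p (u (t₁, x)) * α (t₁, x)
      · exact S.nonpos_of_both h ht₁ hneg₀ hr hs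
      · push Not at hs
        intro t ht x
        have := S.reflect.nonpos_of_r_const h ht₁ hneg₀'
          (S.reflect.r_const h ht₁ hneg₀' fun y => by
            have := hs (-y)
            simp only
            linarith) t ht (-x)
        simpa using this
    · push Not at hr
      exact S.nonpos_of_r_const h ht₁ hneg₀ (S.r_const h ht₁ hneg₀ hr)
  have hrc := S.r_const h ht₁ hneg₀ (S.rx_nonpos h ht₁ hneg₀ hneg)
  have hsc : ∀ x, v (t₁, x) - qfun p (u (t₁, x)) = v (t₁, 0) - qfun p (u (t₁, 0)) := by
    intro x
    have := S.reflect.r_const h ht₁ hneg₀'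
      (S.reflect.rx_nonpos h ht₁ hneg₀' fun t ht x => hneg t ht (-x)) (-x)
    simp only [neg_neg, neg_zero] at this
    linarith
  intro t ht x
  have hn : ∀ s ∈ Icc t₁ t, ∀ x, u (s, x) ≤ 0 := fun s hs => hneg s hs.1
  have h1 := S.r_le h ht₁ hn (fun x => (hrc x).le) t ⟨ht, le_rfl⟩ x
  have h2 := S.le_r h ht₁ hn (fun x => (hrc x).ge) t ⟨ht, le_rfl⟩ x
  have h3 := S.s_le h ht₁ hn (fun x => (hsc x).le) t ⟨ht, le_rfl⟩ x
  have h4 := S.le_s h ht₁ hn (fun x => (hsc x).ge) t ⟨ht, le_rfl⟩ x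
  exact ⟨h.qfun_strictAnti.injOn (hneg t ht x) (hneg₀ 0).le (by linarith), by linarith⟩

end Sol

/-! ### From the `C²` hypotheses to the first-order form -/

lemma fderiv_periodic {f : ℝ × ℝ → ℝ} (hf : ∀ t x : ℝ, f (t, x + 1) = f (t, x)) (t x : ℝ) :
    fderiv ℝ f (t, x + 1) = fderiv ℝ f (t, x) := by
  have h1 : (fun z => f (z + ((0 : ℝ), (1 : ℝ)))) = f := by
    funext z
    have hz : z + ((0 : ℝ), (1 : ℝ)) = (z.1, z.2 + 1) := by ext <;> simp
    rw [hz]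
    exact hf z.1 z.2
  have h2 := fderiv_comp_add_right (𝕜 := ℝ) (f := f) (x := (t, x)) ((0 : ℝ), (1 : ℝ))
  rw [h1] at h2
  rw [h2]
  simp

lemma eq_pd (A : ℝ × ℝ →L[ℝ] ℝ) : A = pd (A (1, 0)) (A (0, 1)) := by
  ext <;> simp

/-- The `t`-derivatives of `uₓ` and `vₓ` come from differentiating the system in `x`, by symmetry
of second derivatives. -/
lemma sol_of_contDiffOn {p : ℝ → ℝ} (h : Law p) {t₀ : ℝ} {u v : ℝ × ℝ → ℝ}
    (hu : ContDiffOn ℝ 2 u {z : ℝ × ℝ | t₀ ≤ z.1})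
    (hv : ContDiffOn ℝ 2 v {z : ℝ × ℝ | t₀ ≤ z.1})
    (hsys : PSystem p u v {z : ℝ × ℝ | t₀ ≤ z.1})
    (huper : ∀ t x : ℝ, u (t, x + 1) = u (t, x))
    (hvper : ∀ t x : ℝ, v (t, x + 1) = v (t, x)) :
    ∃ α β αx βx, Sol p t₀ u v α β αx βx := by
  have hO : ∀ z : ℝ × ℝ, t₀ < z.1 → {z : ℝ × ℝ | t₀ < z.1} ∈ 𝓝 z := fun z hz =>
    (isOpen_lt continuous_const continuous_fst).mem_nhds hz
  have hC : ∀ f : ℝ × ℝ → ℝ, ContDiffOn ℝ 2 f {z : ℝ × ℝ | t₀ ≤ z.1} →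
      ∀ z : ℝ × ℝ, t₀ < z.1 → ContDiffAt ℝ 2 f z := fun f hf z hz =>
    hf.contDiffAt (mem_of_superset (hO z hz) fun y (hy : t₀ < y.1) =>
      show t₀ ≤ y.1 from hy.le)
  have hD : ∀ f : ℝ × ℝ → ℝ, ContDiffOn ℝ 2 f {z : ℝ × ℝ | t₀ ≤ z.1} →
      ∀ z : ℝ × ℝ, t₀ < z.1 → HasFDerivAt f (fderiv ℝ f z) z := fun f hf z hz =>
    ((hC f hf z hz).differentiableAt (by norm_num)).hasFDerivAt
  have hpar : ∀ f : ℝ × ℝ → ℝ, ContDiffOn ℝ 2 f {z : ℝ × ℝ | t₀ ≤ z.1} →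
      ∀ z : ℝ × ℝ, t₀ < z.1 →
        HasFDerivAt f (pd (fderiv ℝ f z (1, 0)) (fderiv ℝ f z (0, 1))) z := by
    intro f hf z hz
    rw [← eq_pd]
    exact hD f hf z hz
  have hD2 : ∀ f : ℝ × ℝ → ℝ, ContDiffOn ℝ 2 f {z : ℝ × ℝ | t₀ ≤ z.1} →
      ∀ z : ℝ × ℝ, t₀ < z.1 → ∀ e : ℝ × ℝ, HasFDerivAt (fun y => fderiv ℝ f y e)
        ((fderiv ℝ (fderiv ℝ f) z).flip e) z := by
    intro f hf z hz e
    have h1 : ContDiffAt ℝ 1 (fderiv ℝ f) z :=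
      (hC f hf z hz).fderiv_right (by norm_num)
    have h2 := (h1.differentiableAt (by norm_num)).hasFDerivAt
    exact (ContinuousLinearMap.apply ℝ ℝ e).hasFDerivAt.comp z h2
  have hsymm : ∀ f : ℝ × ℝ → ℝ, ContDiffOn ℝ 2 f {z : ℝ × ℝ | t₀ ≤ z.1} →
      ∀ z : ℝ × ℝ, t₀ < z.1 → IsSymmSndFDerivAt ℝ f z := fun f hf z hz =>
    (hC f hf z hz).isSymmSndFDerivAt (by simp)
  have hut : ∀ z : ℝ × ℝ, t₀ < z.1 → fderiv ℝ u z (1, 0) = -fderiv ℝ v z (0, 1) := by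
    intro z hz
    have h1 := (hsys z (le_of_lt hz)).1
    rwa [(hasDerivAt_fst (hpar u hu z hz)).deriv, (hasDerivAt_snd (hpar v hv z hz)).deriv] at h1
  have hvt : ∀ z : ℝ × ℝ, t₀ < z.1 →
      fderiv ℝ v z (1, 0) = deriv p (u z) * fderiv ℝ u z (0, 1) := by
    intro z hz
    have h1 := (hsys z (le_of_lt hz)).2
    have h2 : HasDerivAt (fun y => p (u (z.1, y))) (deriv p (u z) * fderiv ℝ u z (0, 1)) z.2 :=
      HasDerivAt.comp (h₂ := p) z.2 (h.hasDerivAt (u z)) (hasDerivAt_snd (hpar u hu z hz))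
    rwa [(hasDerivAt_fst (hpar v hv z hz)).deriv, h2.deriv] at h1
  refine ⟨fun z => fderiv ℝ u z (0, 1), fun z => fderiv ℝ v z (0, 1),
    fun z => fderiv ℝ (fderiv ℝ u) z (0, 1) (0, 1),
    fun z => fderiv ℝ (fderiv ℝ v) z (0, 1) (0, 1), ?_, ?_, ?_, ?_, huper, hvper, ?_, ?_⟩
  · intro z hz
    have := hpar u hu z hz
    rwa [hut z hz] at this
  · intro z hz
    have := hpar v hv z hz
    rwa [hvt z hz] at this
  · intro z hz
    have h1 := hD2 u hu z hz (0, 1)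
    rw [eq_pd ((fderiv ℝ (fderiv ℝ u) z).flip (0, 1))] at h1
    simp only [ContinuousLinearMap.flip_apply] at h1
    rw [hsymm u hu z hz (1, 0) (0, 1)] at h1
    -- `uₜₓ = (-vₓ)ₓ`, since `uₜ = -vₓ` near `z`
    have h2 := (hD2 u hu z hz (1, 0)).unique
      ((hD2 v hv z hz (0, 1)).neg.congr_of_eventuallyEq
        (mem_of_superset (hO z hz) fun y hy => hut y hy))
    have h3 := congrArg (fun A : ℝ × ℝ →L[ℝ] ℝ => A (0, 1)) h2
    simp only [ContinuousLinearMap.flip_apply, neg_apply] at h3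
    rwa [h3] at h1
  · intro z hz
    have h1 := hD2 v hv z hz (0, 1)
    rw [eq_pd ((fderiv ℝ (fderiv ℝ v) z).flip (0, 1))] at h1
    simp only [ContinuousLinearMap.flip_apply] at h1
    rw [hsymm v hv z hz (1, 0) (0, 1)] at h1
    -- `vₜₓ = (p'(u) uₓ)ₓ`, since `vₜ = p'(u) uₓ` near `z`
    have h2 := (hD2 v hv z hz (1, 0)).unique
      ((((h.hasDerivAt' (u z)).comp_hasFDerivAt z (hD u hu z hz)).mul
        (hD2 u hu z hz (0, 1))).congr_of_eventuallyEq
        (mem_of_superset (hO z hz) fun y hy => hvt y hy))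
    have h3 := congrArg (fun A : ℝ × ℝ →L[ℝ] ℝ => A (0, 1)) h2
    simp at h3
    rw [h3] at h1
    convert! h1 using 2
    ring
  · intro t x
    simp only [fderiv_periodic huper]
  · intro t x
    simp only [fderiv_periodic hvper]

/-- Theorem 1.1: a `C²` solution of the p-system on the semi-infinite cylinder
`t ≥ t₀` (1-periodic in `x`) with strictly hyperbolic initial data `u(t₀,·) < 0`
is hyperbolic everywhere and constant. -/
theorem psystem_hyperbolic_initial_data_constant
    (p : ℝ → ℝ) (hp : ContDiff ℝ 2 p) (hconv : ∀ w : ℝ, 0 < deriv (deriv p) w)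
    (hp0 : p 0 = 0) (hp'0 : deriv p 0 = 0)
    (t₀ : ℝ) (u v : ℝ × ℝ → ℝ)
    (hu : ContDiffOn ℝ 2 u {z : ℝ × ℝ | t₀ ≤ z.1})
    (hv : ContDiffOn ℝ 2 v {z : ℝ × ℝ | t₀ ≤ z.1})
    (hsys : PSystem p u v {z : ℝ × ℝ | t₀ ≤ z.1})
    (huper : ∀ t x : ℝ, u (t, x + 1) = u (t, x))
    (hvper : ∀ t x : ℝ, v (t, x + 1) = v (t, x))
    (hinit : ∀ x : ℝ, u (t₀, x) < 0) :
    (∀ z : ℝ × ℝ, t₀ ≤ z.1 → u z < 0) ∧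
    (∃ cu cv : ℝ, ∀ z : ℝ × ℝ, t₀ ≤ z.1 → u z = cu ∧ v z = cv) := by
  have h : Law p := ⟨hp, hconv, hp'0⟩
  obtain ⟨α, β, αx, βx, S⟩ := sol_of_contDiffOn h hu hv hsys huper hvper
  -- strict negativity persists for a short time, by compactness of the period
  have hev : ∀ᶠ t in 𝓝 t₀, ∀ x ∈ Icc (0 : ℝ) 1, t₀ ≤ t → u (t, x) < 0 := by
    refine isCompact_Icc.eventually_forall_of_forall_eventually fun x _ => ?_
    have h1 : ContinuousWithinAt u {z : ℝ × ℝ | t₀ ≤ z.1} (t₀, x) :=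
      hu.continuousOn (t₀, x) (le_refl t₀)
    have h2 := h1.eventually (gt_mem_nhds (hinit x))
    rw [eventually_nhdsWithin_iff] at h2
    exact h2
  obtain ⟨η, hη, hηneg⟩ := Metric.eventually_nhds_iff.1 hev
  have hnear : ∀ t, t₀ ≤ t → t ≤ t₀ + η / 2 → ∀ x, u (t, x) < 0 := by
    intro t ht ht' x
    obtain ⟨y, hy, he⟩ := periodic_fract huper t x
    rw [he]
    refine hηneg ?_ y hy ht
    rw [Real.dist_eq, abs_of_nonneg (by linarith)]
    linarith
  have hopen : ∀ t, t₀ < t → ∀ x, u (t, x) = u (t₀ + η / 2, 0) ∧ v (t, x) = v (t₀ + η / 2, 0) := by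
    intro t ht x
    set t₂ := min t (t₀ + η / 2) with ht₂
    have h1 : t₀ < t₂ := lt_min ht (by linarith)
    have h2 := S.constant h h1 (hnear t₂ h1.le (min_le_right _ _))
    have h3 := h2 t (min_le_left _ _) x
    have h4 := h2 (t₀ + η / 2) (min_le_right _ _) 0
    exact ⟨h3.1.trans h4.1.symm, h3.2.trans h4.2.symm⟩
  have hlim : ∀ f : ℝ × ℝ → ℝ, ContDiffOn ℝ 2 f {z : ℝ × ℝ | t₀ ≤ z.1} → ∀ c : ℝ,
      (∀ t, t₀ < t → ∀ x, f (t, x) = c) → ∀ x, f (t₀, x) = c := by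
    intro f hf c hc x
    have h1 : Tendsto f (𝓝[{z : ℝ × ℝ | t₀ ≤ z.1}] (t₀, x)) (𝓝 (f (t₀, x))) :=
      hf.continuousOn (t₀, x) (le_refl t₀)
    have h2 : Tendsto (fun t => (t, x)) (𝓝[>] t₀) (𝓝[{z : ℝ × ℝ | t₀ ≤ z.1}] (t₀, x)) := by
      refine tendsto_nhdsWithin_iff.2 ⟨?_, ?_⟩
      · exact (Continuous.tendsto (by fun_prop) t₀).mono_left nhdsWithin_le_nhds
      · filter_upwards [self_mem_nhdsWithin] with t ht using le_of_lt ht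
    refine tendsto_nhds_unique (h1.comp h2) (tendsto_const_nhds.congr' ?_)
    filter_upwards [self_mem_nhdsWithin] with t ht using (hc t ht x).symm
  have hall : ∀ z : ℝ × ℝ, t₀ ≤ z.1 → u z = u (t₀ + η / 2, 0) ∧ v z = v (t₀ + η / 2, 0) := by
    rintro ⟨t, x⟩ hz
    rcases (show t₀ ≤ t from hz).eq_or_lt with h0 | h0
    · subst h0
      exact ⟨hlim u hu _ (fun t ht x => (hopen t ht x).1) x,
        hlim v hv _ (fun t ht x => (hopen t ht x).2) x⟩
    · exact hopen t h0 x
  refine ⟨fun z hz => ?_, _, _, hall⟩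
  rw [(hall z hz).1]
  exact hnear _ (by linarith) le_rfl 0
end

section
/- Let (u, v) be a C²-smooth solution of the p-system on the whole cylinder ℝ × ℝ (1-periodic in x). Then both u and v are constant functions. -/
open Set Filter Topology

namespace PSys

/-! ### Partial derivatives, fluxes and solutions -/

/-- The time derivative of a function of `(t, x)`. -/
noncomputable def Dt (f : ℝ × ℝ → ℝ) (z : ℝ × ℝ) : ℝ := fderiv ℝ f z (1, 0)

/-- The space derivative of a function of `(t, x)`. -/
noncomputable def Dx (f : ℝ × ℝ → ℝ) (z : ℝ × ℝ) : ℝ := fderiv ℝ f z (0, 1)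

/-- The hypotheses on the nonlinearity `p`. -/
structure Flux (p : ℝ → ℝ) : Prop where
  smooth : ContDiff ℝ 2 p
  convex : ∀ w, 0 < deriv (deriv p) w
  deriv_zero : deriv p 0 = 0

/-- A `C²` solution of the p-system on the cylinder, in terms of Fréchet derivatives and with the
second equation written in the nonconservative form `v_t = p'(u) u_x`. -/
structure Sol (p : ℝ → ℝ) (u v : ℝ × ℝ → ℝ) : Prop where
  hu : ContDiff ℝ 2 u
  hv : ContDiff ℝ 2 v
  eq1 : ∀ z, Dt u z = -Dx v z
  eq2 : ∀ z, Dt v z = deriv p (u z) * Dx u z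
  perU : ∀ t x, u (t, x + 1) = u (t, x)
  perV : ∀ t x, v (t, x + 1) = v (t, x)

/-- The characteristic speed `√(-p')`; it vanishes on the elliptic side `w ≥ 0`, where the
square root takes its junk value. -/
noncomputable def lam (p : ℝ → ℝ) (w : ℝ) : ℝ := Real.sqrt (-(deriv p w))

lemma hasDerivAt_curve {f : ℝ × ℝ → ℝ} {γ : ℝ → ℝ} {t c : ℝ}
    (hf : DifferentiableAt ℝ f (t, γ t)) (hγ : HasDerivAt γ c t) :
    HasDerivAt (fun τ => f (τ, γ τ)) (Dt f (t, γ t) + c * Dx f (t, γ t)) t := by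
  have h1 : HasDerivAt (fun τ : ℝ => (τ, γ τ)) (1, c) t := (hasDerivAt_id t).prodMk hγ
  have h2 := hf.hasFDerivAt.comp_hasDerivAt t h1
  have h3 : ((1 : ℝ), c) = (1, 0) + c • ((0 : ℝ), (1 : ℝ)) := by simp
  rw [h3, map_add, map_smul, smul_eq_mul] at h2
  exact h2

lemma hasDerivAt_t {f : ℝ × ℝ → ℝ} (t x : ℝ) (hf : DifferentiableAt ℝ f (t, x)) :
    HasDerivAt (fun τ => f (τ, x)) (Dt f (t, x)) t := by
  simpa using hasDerivAt_curve (γ := fun _ => x) hf (hasDerivAt_const t x)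

lemma hasDerivAt_x {f : ℝ × ℝ → ℝ} (t x : ℝ) (hf : DifferentiableAt ℝ f (t, x)) :
    HasDerivAt (fun y => f (t, y)) (Dx f (t, x)) x := by
  have h1 : HasDerivAt (fun y : ℝ => (t, y)) (0, 1) x :=
    (hasDerivAt_const x t).prodMk (hasDerivAt_id x)
  exact hf.hasFDerivAt.comp_hasDerivAt x h1

lemma contDiff_Dt {f : ℝ × ℝ → ℝ} (hf : ContDiff ℝ 2 f) : ContDiff ℝ 1 (Dt f) :=
  (hf.fderiv_right (m := 1) (by norm_num)).clm_apply contDiff_const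

lemma contDiff_Dx {f : ℝ × ℝ → ℝ} (hf : ContDiff ℝ 2 f) : ContDiff ℝ 1 (Dx f) :=
  (hf.fderiv_right (m := 1) (by norm_num)).clm_apply contDiff_const

lemma Dt_Dx {f : ℝ × ℝ → ℝ} (hf : ContDiff ℝ 2 f) (z : ℝ × ℝ) :
    Dt (Dx f) z = Dx (Dt f) z := by
  have hd : DifferentiableAt ℝ (fderiv ℝ f) z :=
    (hf.fderiv_right (m := 1) (by norm_num)).differentiable (by norm_num) z
  have hs := (hf.contDiffAt (x := z)).isSymmSndFDerivAt (by simp)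
  have h := hs (1, 0) (0, 1)
  have e1 : ∀ a : ℝ × ℝ, fderiv ℝ (fun y => fderiv ℝ f y a) z
      = (fderiv ℝ (fderiv ℝ f) z).flip a := fun a => by
    rw [fderiv_clm_apply hd (differentiableAt_const a)]
    ext <;> simp
  unfold Dt Dx
  rw [e1, e1]
  exact h

/-! ### The characteristic speed and the potential `q` -/

namespace Flux
variable {p : ℝ → ℝ}

lemma deriv_contDiff (hp : Flux p) : ContDiff ℝ 1 (deriv p) := by
  have h : ContDiff ℝ (1 + 1) p := by simpa [one_add_one_eq_two] using hp.smooth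
  exact (contDiff_succ_iff_deriv.1 h).2.2

lemma deriv_hasDerivAt (hp : Flux p) (w : ℝ) : HasDerivAt (deriv p) (deriv (deriv p) w) w :=
  (hp.deriv_contDiff.differentiable (by norm_num) w).hasDerivAt

lemma deriv2_continuous (hp : Flux p) : Continuous (deriv (deriv p)) :=
  hp.deriv_contDiff.continuous_deriv (by norm_num)

lemma hasDerivAt (hp : Flux p) (w : ℝ) : HasDerivAt p (deriv p w) w :=
  (hp.smooth.differentiable (by norm_num) w).hasDerivAt

lemma deriv_strictMono (hp : Flux p) : StrictMono (deriv p) :=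
  strictMono_of_deriv_pos hp.convex

lemma deriv_neg (hp : Flux p) {w : ℝ} (hw : w < 0) : deriv p w < 0 := by
  have := hp.deriv_strictMono hw
  rwa [hp.deriv_zero] at this

lemma neg_of_deriv_neg (hp : Flux p) {w : ℝ} (hw : deriv p w < 0) : w < 0 := by
  rw [← hp.deriv_zero] at hw
  exact hp.deriv_strictMono.lt_iff_lt.1 hw

lemma lam_pos (hp : Flux p) {w : ℝ} (hw : w < 0) : 0 < lam p w :=
  Real.sqrt_pos.2 (neg_pos.2 (hp.deriv_neg hw))

lemma lam_sq (hp : Flux p) {w : ℝ} (hw : w < 0) : lam p w ^ 2 = -deriv p w :=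
  Real.sq_sqrt (neg_pos.2 (hp.deriv_neg hw)).le

lemma lam_nonneg (w : ℝ) : 0 ≤ lam p w := Real.sqrt_nonneg _

lemma lam_antitone (hp : Flux p) : Antitone (lam p) := fun _ _ h =>
  Real.sqrt_le_sqrt (neg_le_neg (hp.deriv_strictMono.monotone h))

lemma lam_continuous (hp : Flux p) : Continuous (lam p) :=
  hp.deriv_contDiff.continuous.neg.sqrt

lemma lam_hasDerivAt (hp : Flux p) {w : ℝ} (hw : w < 0) :
    HasDerivAt (lam p) (-deriv (deriv p) w / (2 * lam p w)) w :=
  (hp.deriv_hasDerivAt w).neg.sqrt (neg_pos.2 (hp.deriv_neg hw)).ne'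

lemma q_hasDerivAt (hp : Flux p) (w : ℝ) : HasDerivAt (qfun p) (-lam p w) w := by
  have hc := hp.lam_continuous
  exact intervalIntegral.integral_hasDerivAt_left (hc.intervalIntegrable _ _)
    (hc.stronglyMeasurableAtFilter _ _) hc.continuousAt

lemma q_differentiable (hp : Flux p) : Differentiable ℝ (qfun p) :=
  fun w => (hp.q_hasDerivAt w).differentiableAt

lemma q_antitone (hp : Flux p) : Antitone (qfun p) :=
  antitone_of_deriv_nonpos hp.q_differentiable fun w => by
    rw [(hp.q_hasDerivAt w).deriv]; exact neg_nonpos.2 (lam_nonneg w)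

lemma exists_q_gt (hp : Flux p) (M : ℝ) : ∃ U < 0, M < qfun p U := by
  have h1 : 0 < lam p (-1) := hp.lam_pos (by norm_num)
  -- On `w ≤ -1` the slope of `q` is at most `-lam (-1) < 0`, so `q` grows at least linearly.
  have hanti : AntitoneOn (fun w => qfun p w + lam p (-1) * w) (Iic (-1)) := by
    have hd : ∀ w, HasDerivAt (fun w => qfun p w + lam p (-1) * w)
        (-lam p w + lam p (-1) * 1) w := fun w =>
      (hp.q_hasDerivAt w).add ((hasDerivAt_id w).const_mul _)
    refine antitoneOn_of_deriv_nonpos (convex_Iic _)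
      (fun w _ => (hd w).continuousAt.continuousWithinAt)
      (fun w _ => (hd w).differentiableAt.differentiableWithinAt) fun w hw => ?_
    rw [(hd w).deriv]
    rw [interior_Iic] at hw
    have := hp.lam_antitone (le_of_lt hw)
    linarith
  set U := -1 - (|M - qfun p (-1)| + 1) / lam p (-1) with hU
  have hUle : U ≤ -1 := by
    have : 0 ≤ (|M - qfun p (-1)| + 1) / lam p (-1) := by positivity
    linarith
  refine ⟨U, by linarith, ?_⟩
  have h2 := hanti (mem_Iic.2 hUle) (mem_Iic.2 le_rfl) hUle
  have h3 : lam p (-1) * U = -lam p (-1) - (|M - qfun p (-1)| + 1) := by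
    rw [hU]; field_simp
  have h4 := le_abs_self (M - qfun p (-1))
  simp only at h2
  linarith

end Flux

/-! ### Periodic bounds and reflected solutions -/

lemma exists_periodic_bound {f : ℝ × ℝ → ℝ} (hf : Continuous f)
    (hper : ∀ t x, f (t, x + 1) = f (t, x)) (a b : ℝ) :
    ∃ C > 0, ∀ t ∈ Icc a b, ∀ x, |f (t, x)| ≤ C := by
  obtain ⟨C, hC⟩ := (isCompact_Icc.prod isCompact_Icc :
    IsCompact (Icc a b ×ˢ Icc (0 : ℝ) 1)).exists_bound_of_continuousOn hf.continuousOn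
  refine ⟨max C 1, lt_max_of_lt_right one_pos, fun t ht x => ?_⟩
  have hP : Function.Periodic (fun x => f (t, x)) 1 := fun x => hper t x
  obtain ⟨y, hy, hxy⟩ := hP.exists_mem_Ico₀ one_pos x
  rw [hxy]
  exact (hC (t, y) ⟨ht, hy.1, hy.2.le⟩).trans (le_max_left _ _)

lemma Dx_periodic {f : ℝ × ℝ → ℝ} (hf : Differentiable ℝ f)
    (hper : ∀ t x, f (t, x + 1) = f (t, x)) (t x : ℝ) : Dx f (t, x + 1) = Dx f (t, x) := by
  have h1 := (hasDerivAt_x t (x + 1) (hf _)).comp_add_const x 1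
  simp only [hper] at h1
  exact h1.unique (hasDerivAt_x t x (hf _))

lemma partials_reflX {f : ℝ × ℝ → ℝ} (hf : Differentiable ℝ f) (z : ℝ × ℝ) :
    Dt (fun z => f (z.1, -z.2)) z = Dt f (z.1, -z.2) ∧
      Dx (fun z => f (z.1, -z.2)) z = -Dx f (z.1, -z.2) := by
  have hg : Differentiable ℝ (fun z : ℝ × ℝ => f (z.1, -z.2)) :=
    hf.comp (differentiable_fst.prodMk differentiable_snd.neg)
  constructor
  · exact (hasDerivAt_t z.1 z.2 (hg _)).unique (hasDerivAt_t z.1 (-z.2) (hf _))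
  · have h := (hasDerivAt_x z.1 (-z.2) (hf _)).scomp z.2 (hasDerivAt_neg z.2)
    rw [smul_eq_mul, neg_one_mul] at h
    exact (hasDerivAt_x z.1 z.2 (hg _)).unique h

lemma partials_reflT {f : ℝ × ℝ → ℝ} (hf : Differentiable ℝ f) (z : ℝ × ℝ) :
    Dt (fun z => f (-z.1, z.2)) z = -Dt f (-z.1, z.2) ∧
      Dx (fun z => f (-z.1, z.2)) z = Dx f (-z.1, z.2) := by
  have hg : Differentiable ℝ (fun z : ℝ × ℝ => f (-z.1, z.2)) :=
    hf.comp (differentiable_fst.neg.prodMk differentiable_snd)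
  constructor
  · have h := (hasDerivAt_t (-z.1) z.2 (hf _)).scomp z.1 (hasDerivAt_neg z.1)
    rw [smul_eq_mul, neg_one_mul] at h
    exact (hasDerivAt_t z.1 z.2 (hg _)).unique h
  · exact (hasDerivAt_x z.1 z.2 (hg _)).unique (hasDerivAt_x (-z.1) z.2 (hf _))

lemma Dt_neg (f : ℝ × ℝ → ℝ) (z : ℝ × ℝ) : Dt (fun z => -f z) z = -Dt f z := by
  simp [Dt, fderiv_fun_neg]

lemma Dx_neg (f : ℝ × ℝ → ℝ) (z : ℝ × ℝ) : Dx (fun z => -f z) z = -Dx f z := by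
  simp [Dx, fderiv_fun_neg]

section
variable {p : ℝ → ℝ} {u v : ℝ × ℝ → ℝ}

namespace Sol

lemma du (h : Sol p u v) : Differentiable ℝ u := h.hu.differentiable (by norm_num)

lemma dv (h : Sol p u v) : Differentiable ℝ v := h.hv.differentiable (by norm_num)

lemma cDxu (h : Sol p u v) : Continuous (Dx u) := (contDiff_Dx h.hu).continuous

lemma cDxv (h : Sol p u v) : Continuous (Dx v) := (contDiff_Dx h.hv).continuous

lemma reflX (h : Sol p u v) : Sol p (fun z => u (z.1, -z.2)) (fun z => -v (z.1, -z.2)) where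
  hu := h.hu.comp (contDiff_fst.prodMk contDiff_snd.neg)
  hv := (h.hv.comp (contDiff_fst.prodMk contDiff_snd.neg)).neg
  eq1 z := by
    rw [(partials_reflX h.du z).1, Dx_neg (fun z => v (z.1, -z.2)),
      (partials_reflX h.dv z).2, h.eq1]
    ring
  eq2 z := by
    rw [(partials_reflX h.du z).2, Dt_neg (fun z => v (z.1, -z.2)),
      (partials_reflX h.dv z).1, h.eq2]
    ring
  perU t x := by
    have := h.perU t (-(x + 1))
    simp only
    rw [← this]; congr 2; ring
  perV t x := by
    have := h.perV t (-(x + 1))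
    simp only
    rw [← this]; congr 3; ring

lemma reflT (h : Sol p u v) : Sol p (fun z => u (-z.1, z.2)) (fun z => -v (-z.1, z.2)) where
  hu := h.hu.comp (contDiff_fst.neg.prodMk contDiff_snd)
  hv := (h.hv.comp (contDiff_fst.neg.prodMk contDiff_snd)).neg
  eq1 z := by
    rw [(partials_reflT h.du z).1, Dx_neg (fun z => v (-z.1, z.2)),
      (partials_reflT h.dv z).2, h.eq1]
  eq2 z := by
    rw [(partials_reflT h.du z).2, Dt_neg (fun z => v (-z.1, z.2)),
      (partials_reflT h.dv z).1, h.eq2]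
    ring
  perU t x := h.perU (-t) x
  perV t x := by
    simp only
    rw [h.perV]

end Sol

/-! ### Riemann invariants -/

/-- The Riemann invariant `v - q(u)`, transported with speed `lam` where `u < 0`. -/
noncomputable def rInv (p : ℝ → ℝ) (u v : ℝ × ℝ → ℝ) (z : ℝ × ℝ) : ℝ := v z - qfun p (u z)

/-- The Riemann invariant `v + q(u)`, transported with speed `-lam` where `u < 0`. -/
noncomputable def sInv (p : ℝ → ℝ) (u v : ℝ × ℝ → ℝ) (z : ℝ × ℝ) : ℝ := v z + qfun p (u z)

/-- The space derivative of `rInv`. -/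
noncomputable def rSlope (p : ℝ → ℝ) (u v : ℝ × ℝ → ℝ) (z : ℝ × ℝ) : ℝ :=
  Dx v z + lam p (u z) * Dx u z

/-- The space derivative of `sInv`. -/
noncomputable def sSlope (p : ℝ → ℝ) (u v : ℝ × ℝ → ℝ) (z : ℝ × ℝ) : ℝ :=
  Dx v z - lam p (u z) * Dx u z

/-- The weighted slope `√lam · r_x`, which solves the Riccati equation `y' = k y²` along
characteristics and vanishes on the boundary of the hyperbolic region. -/
noncomputable def ySlope (p : ℝ → ℝ) (u v : ℝ × ℝ → ℝ) (z : ℝ × ℝ) : ℝ :=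
  Real.sqrt (lam p (u z)) * rSlope p u v z

/-- The coefficient `k = p'' / (4 lam^{5/2})` of the Riccati equation for `ySlope`. -/
noncomputable def kCoef (p : ℝ → ℝ) (w : ℝ) : ℝ :=
  deriv (deriv p) w / (4 * lam p w ^ 2 * Real.sqrt (lam p w))

lemma kCoef_pos (hp : Flux p) {w : ℝ} (hw : w < 0) : 0 < kCoef p w := by
  have h1 := hp.lam_pos hw
  have h2 := hp.convex w
  have h3 := Real.sqrt_pos.2 h1
  unfold kCoef
  positivity

lemma continuous_rSlope (hp : Flux p) (h : Sol p u v) : Continuous (rSlope p u v) :=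
  h.cDxv.add ((hp.lam_continuous.comp h.hu.continuous).mul h.cDxu)

lemma continuous_ySlope (hp : Flux p) (h : Sol p u v) : Continuous (ySlope p u v) :=
  (hp.lam_continuous.comp h.hu.continuous).sqrt.mul (continuous_rSlope hp h)

section along
variable {γ : ℝ → ℝ} {t : ℝ}

lemma rInv_along (hp : Flux p) (h : Sol p u v) (hneg : u (t, γ t) < 0)
    (hγ : HasDerivAt γ (lam p (u (t, γ t))) t) :
    HasDerivAt (fun τ => rInv p u v (τ, γ τ)) 0 t := by
  have h1 := hasDerivAt_curve (h.du _) hγ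
  have h2 := hasDerivAt_curve (h.dv _) hγ
  have h3 := (hp.q_hasDerivAt (u (t, γ t))).comp t h1
  refine (h2.sub h3).congr_deriv ?_
  rw [h.eq1, h.eq2]
  linear_combination Dx u (t, γ t) * hp.lam_sq hneg

lemma sInv_along (hp : Flux p) (h : Sol p u v) (hneg : u (t, γ t) < 0)
    (hγ : HasDerivAt γ (lam p (u (t, γ t))) t) :
    HasDerivAt (fun τ => sInv p u v (τ, γ τ))
      (2 * lam p (u (t, γ t)) * sSlope p u v (t, γ t)) t := by
  have h1 := hasDerivAt_curve (h.du _) hγ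
  have h2 := hasDerivAt_curve (h.dv _) hγ
  have h3 := (hp.q_hasDerivAt (u (t, γ t))).comp t h1
  refine (h2.add h3).congr_deriv ?_
  rw [h.eq1, h.eq2]
  unfold sSlope
  linear_combination Dx u (t, γ t) * hp.lam_sq hneg

/-- The Riccati equation for `ySlope` along a characteristic in the hyperbolic region. -/
lemma ySlope_along (hp : Flux p) (h : Sol p u v) (hneg : u (t, γ t) < 0)
    (hγ : HasDerivAt γ (lam p (u (t, γ t))) t) :
    HasDerivAt (fun τ => ySlope p u v (τ, γ τ))
      (kCoef p (u (t, γ t)) * ySlope p u v (t, γ t) ^ 2) t := by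
  set z := (t, γ t) with hz
  have hux : DifferentiableAt ℝ (Dx u) z := (contDiff_Dx h.hu).differentiable (by norm_num) z
  have hvx : DifferentiableAt ℝ (Dx v) z := (contDiff_Dx h.hv).differentiable (by norm_num) z
  have h1 := hasDerivAt_curve (h.du _) hγ
  have h2 := hasDerivAt_curve hux hγ
  have h3 := hasDerivAt_curve hvx hγ
  have hl := (hp.lam_hasDerivAt hneg).comp t h1
  have hlpos := hp.lam_pos hneg
  have hm := hl.sqrt hlpos.ne'
  have hy := hm.mul (h3.add (hl.mul h2))
  -- The system differentiated in `x`.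
  have e1 : Dt (Dx u) z = -Dx (Dx v) z := by
    rw [Dt_Dx h.hu, show Dt u = fun z => -Dx v z from funext h.eq1, Dx_neg]
  have e2 : Dt (Dx v) z
      = deriv (deriv p) (u z) * Dx u z ^ 2 + deriv p (u z) * Dx (Dx u) z := by
    rw [Dt_Dx h.hv, show Dt v = fun z => deriv p (u z) * Dx u z from funext h.eq2]
    have a1 := (hp.deriv_hasDerivAt (u z)).comp (γ t) (hasDerivAt_x t (γ t) (h.du _))
    have a2 := a1.mul (hasDerivAt_x t (γ t) hux)
    have hd : DifferentiableAt ℝ (fun z => deriv p (u z) * Dx u z) z :=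
      (((hp.deriv_hasDerivAt (u z)).differentiableAt).comp z (h.du z)).mul hux
    refine ((hasDerivAt_x t (γ t) hd).unique a2).trans ?_
    simp only [Function.comp, ← hz]
    ring
  have e3 : deriv p (u z) = -lam p (u z) ^ 2 := by rw [hp.lam_sq hneg]; ring
  refine hy.congr_deriv ?_
  simp only [Function.comp, Pi.add_apply, Pi.mul_apply, ← hz]
  rw [e1, e2, h.eq1, e3]
  unfold ySlope kCoef rSlope
  have hmpos := Real.sqrt_pos.2 hlpos
  have hms : Real.sqrt (lam p (u z)) ^ 2 = lam p (u z) := Real.sq_sqrt hlpos.le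
  set m := Real.sqrt (lam p (u z)) with hmdef
  rw [← hms]
  field_simp
  ring

end along

/-! ### Characteristics with positive slope live forever -/

lemma abs_sqrt_sub_sqrt_le {a b δ : ℝ} (hδ : 0 < δ) (ha : δ ≤ a) (hb : δ ≤ b) :
    |Real.sqrt a - Real.sqrt b| ≤ (Real.sqrt δ)⁻¹ * |a - b| := by
  have hd := Real.sqrt_pos.2 hδ
  have h1 := Real.sqrt_le_sqrt ha
  have h2 := Real.sqrt_nonneg b
  have h3 : a - b = (Real.sqrt a - Real.sqrt b) * (Real.sqrt a + Real.sqrt b) := by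
    have e1 := Real.sq_sqrt (hδ.le.trans ha)
    have e2 := Real.sq_sqrt (hδ.le.trans hb)
    linear_combination e2 - e1
  rw [h3, abs_mul, abs_of_pos (show 0 < Real.sqrt a + Real.sqrt b by linarith),
    inv_mul_eq_div, le_div_iff₀ hd]
  exact mul_le_mul_of_nonneg_left (by linarith) (abs_nonneg _)

/-- Solvability on any time interval of `γ' = √(max g δ)`. The cutoff at `δ > 0` makes the
field Lipschitz in `x`; periodicity makes it bounded. -/
lemma exists_cutoff_curve {g : ℝ × ℝ → ℝ} (hg : ContDiff ℝ 1 g)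
    (hper : ∀ t x, g (t, x + 1) = g (t, x)) {δ : ℝ} (hδ : 0 < δ) (t0 x0 T : ℝ) (hT : t0 ≤ T) :
    ∃ γ : ℝ → ℝ, γ t0 = x0 ∧
      ∀ t ∈ Icc t0 T, HasDerivAt γ (Real.sqrt (max (g (t, γ t)) δ)) t := by
  have hgd : Differentiable ℝ g := hg.differentiable (by norm_num)
  have hDx : Continuous (Dx g) :=
    (hg.continuous_fderiv (by norm_num)).clm_apply continuous_const
  have hF : Continuous fun z => Real.sqrt (max (g z) δ) :=
    (hg.continuous.max continuous_const).sqrt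
  obtain ⟨L, hL0, hL⟩ := exists_periodic_bound hF
    (fun t x => by simp only [hper]) (t0 - 1) (T + 1)
  obtain ⟨C, hC0, hC⟩ := exists_periodic_bound hDx (Dx_periodic hgd hper) (t0 - 1) (T + 1)
  have ht0 : t0 ∈ Icc (t0 - 1) (T + 1) := ⟨by linarith, by linarith⟩
  have hgl : ∀ t ∈ Icc (t0 - 1) (T + 1), ∀ x y, |g (t, x) - g (t, y)| ≤ C * |x - y| := by
    intro t ht x y
    exact Convex.norm_image_sub_le_of_norm_hasDerivWithin_le (s := univ)
      (fun x _ => (hasDerivAt_x t x (hgd _)).hasDerivWithinAt) (fun x _ => hC t ht x)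
      convex_univ (mem_univ y) (mem_univ x)
  have hPL : IsPicardLindelof (fun t x => Real.sqrt (max (g (t, x)) δ))
      (⟨t0, ht0⟩ : Icc (t0 - 1) (T + 1)) x0
      (L * (T + 1 - (t0 - 1))).toNNReal 0 L.toNNReal ((Real.sqrt δ)⁻¹ * C).toNNReal := by
    refine ⟨fun t ht => ?_, fun x _ => ?_, fun t ht x _ => ?_, ?_⟩
    · refine LipschitzWith.lipschitzOnWith (LipschitzWith.of_dist_le_mul fun x y => ?_)
      have hd := Real.sqrt_pos.2 hδ
      rw [Real.coe_toNNReal _ (by positivity), Real.dist_eq, Real.dist_eq, mul_assoc]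
      refine (abs_sqrt_sub_sqrt_le hδ (le_max_right _ _) (le_max_right _ _)).trans ?_
      refine mul_le_mul_of_nonneg_left ?_ (by positivity)
      exact (abs_max_sub_max_le_abs _ _ _).trans (hgl t ht x y)
    · exact (hF.comp (continuous_id.prodMk continuous_const)).continuousOn
    · rw [Real.coe_toNNReal _ hL0.le]
      exact hL t ht x
    · have h0 : 0 ≤ L * (T + 1 - (t0 - 1)) := mul_nonneg hL0.le (by linarith)
      rw [Real.coe_toNNReal _ hL0.le, Real.coe_toNNReal _ h0]
      simp only [NNReal.coe_zero, sub_zero]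
      refine mul_le_mul_of_nonneg_left (max_le ?_ ?_) hL0.le <;> linarith
  obtain ⟨γ, h0, hγ⟩ := hPL.exists_eq_forall_mem_Icc_hasDerivWithinAt₀
  refine ⟨γ, h0, fun t ht => ?_⟩
  exact (hγ t ⟨by linarith [ht.1], by linarith [ht.2]⟩).hasDerivAt
    (Icc_mem_nhds (by linarith [ht.1]) (by linarith [ht.2]))

/-- A forward `lam`-characteristic starting in the hyperbolic region with `r_x > 0` can be
continued to any later time inside the hyperbolic region: `ySlope` does not decrease along it,
whereas it would have to tend to zero at the boundary. -/
lemma exists_char (hp : Flux p) (h : Sol p u v) {t0 x0 T : ℝ} (hT : t0 ≤ T)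
    (hneg : u (t0, x0) < 0) (hR : 0 < rSlope p u v (t0, x0)) :
    ∃ γ : ℝ → ℝ, γ t0 = x0 ∧ ∀ t ∈ Icc t0 T,
      HasDerivAt γ (lam p (u (t, γ t))) t ∧ u (t, γ t) < 0 ∧ 0 < ySlope p u v (t, γ t) := by
  set y0 := ySlope p u v (t0, x0) with hy0
  have hy0pos : 0 < y0 := mul_pos (Real.sqrt_pos.2 (hp.lam_pos hneg)) hR
  obtain ⟨C, hC0, hC⟩ := exists_periodic_bound (continuous_rSlope hp h)
    (fun t x => by
      unfold rSlope
      rw [Dx_periodic h.du h.perU, Dx_periodic h.dv h.perV, h.perU]) t0 T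
  -- For this `ε`, the bound `-p'(u) ≤ ε ^ 4` forces `ySlope ≤ y0 / 2`.
  set ε := y0 / (2 * C) with hε
  have hεpos : 0 < ε := by positivity
  have hroot : Real.sqrt (Real.sqrt (ε ^ 4)) = ε := by
    rw [show ε ^ 4 = (ε ^ 2) ^ 2 by ring, Real.sqrt_sq (by positivity), Real.sqrt_sq hεpos.le]
  have hsmall : ∀ t ∈ Icc t0 T, ∀ x, -deriv p (u (t, x)) ≤ ε ^ 4 →
      ySlope p u v (t, x) < y0 := by
    intro t ht x hx
    have a1 : Real.sqrt (lam p (u (t, x))) ≤ ε := by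
      rw [← hroot]; exact Real.sqrt_le_sqrt (Real.sqrt_le_sqrt hx)
    calc ySlope p u v (t, x) ≤ Real.sqrt (lam p (u (t, x))) * C :=
          mul_le_mul_of_nonneg_left ((le_abs_self _).trans (hC t ht x)) (Real.sqrt_nonneg _)
      _ ≤ ε * C := mul_le_mul_of_nonneg_right a1 hC0.le
      _ = y0 / 2 := by rw [hε]; field_simp
      _ < y0 := by linarith
  obtain ⟨γ, hγ0, hγ⟩ := exists_cutoff_curve (g := fun z => -deriv p (u z)) (δ := ε ^ 4)
    (hp.deriv_contDiff.comp (h.hu.of_le (by norm_num))).neg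
    (fun t x => by simp only [h.perU]) (by positivity) t0 x0 T hT
  have hγc : ContinuousOn γ (Icc t0 T) := fun t ht => (hγ t ht).continuousAt.continuousWithinAt
  have hpair : ContinuousOn (fun t => (t, γ t)) (Icc t0 T) := continuousOn_id.prodMk hγc
  have hyc : ContinuousOn (fun t => ySlope p u v (t, γ t)) (Icc t0 T) :=
    (continuous_ySlope hp h).comp_continuousOn hpair
  have hgood : ∀ t ∈ Icc t0 T, ε ^ 4 < -deriv p (u (t, γ t)) →
      HasDerivAt γ (lam p (u (t, γ t))) t ∧ u (t, γ t) < 0 := by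
    intro t ht hlt
    have hpos : 0 < ε ^ 4 := by positivity
    refine ⟨?_, hp.neg_of_deriv_neg (by linarith)⟩
    have := hγ t ht
    rwa [max_eq_left hlt.le] at this
  have hmono : ∀ t ∈ Icc t0 T, (∀ τ ∈ Ico t0 t, ε ^ 4 < -deriv p (u (τ, γ τ))) →
      y0 ≤ ySlope p u v (t, γ t) := by
    intro t ht hτ
    have hsub : Icc t0 t ⊆ Icc t0 T := Icc_subset_Icc_right ht.2
    have hd : ∀ τ ∈ Ioo t0 t, HasDerivAt (fun t => ySlope p u v (t, γ t))
        (kCoef p (u (τ, γ τ)) * ySlope p u v (τ, γ τ) ^ 2) τ := fun τ hh => by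
      obtain ⟨b1, b2⟩ := hgood τ (hsub ⟨hh.1.le, hh.2.le⟩) (hτ τ ⟨hh.1.le, hh.2⟩)
      exact ySlope_along hp h b2 b1
    have hm : MonotoneOn (fun t => ySlope p u v (t, γ t)) (Icc t0 t) := by
      refine monotoneOn_of_deriv_nonneg (convex_Icc _ _) (hyc.mono hsub) ?_ ?_
      · rw [interior_Icc]
        exact fun τ hh => (hd τ hh).differentiableAt.differentiableWithinAt
      · rw [interior_Icc]
        intro τ hh
        rw [(hd τ hh).deriv]
        have := kCoef_pos hp (hgood τ (hsub ⟨hh.1.le, hh.2.le⟩) (hτ τ ⟨hh.1.le, hh.2⟩)).2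
        positivity
    have := hm (left_mem_Icc.2 ht.1) (right_mem_Icc.2 ht.1) ht.1
    simpa only [hγ0, ← hy0] using this
  have hall : ∀ t ∈ Icc t0 T, ε ^ 4 < -deriv p (u (t, γ t)) := by
    by_contra! hbad
    -- The first time at which the cutoff becomes active.
    have hcomp : IsCompact (Icc t0 T ∩ (fun t => -deriv p (u (t, γ t))) ⁻¹' Iic (ε ^ 4)) := by
      refine isCompact_Icc.of_isClosed_subset (ContinuousOn.preimage_isClosed_of_isClosed
        ?_ isClosed_Icc isClosed_Iic) inter_subset_left
      exact (hp.deriv_contDiff.continuous.comp h.hu.continuous).neg.comp_continuousOn hpair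
    obtain ⟨t1, ht1, hleast⟩ := hcomp.exists_isLeast
      (by obtain ⟨t, ht, hb⟩ := hbad; exact ⟨t, ht, hb⟩)
    have h1 := hmono t1 ht1.1 fun τ hτ => by
      by_contra! hc
      exact absurd (hleast ⟨⟨hτ.1, hτ.2.le.trans ht1.1.2⟩, hc⟩) (not_le.2 hτ.2)
    exact absurd (hsmall t1 ht1.1 _ ht1.2) (not_lt.2 h1)
  refine ⟨γ, hγ0, fun t ht => ⟨(hgood t ht (hall t ht)).1, (hgood t ht (hall t ht)).2, ?_⟩⟩
  exact hy0pos.trans_le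
    (hmono t ht fun τ hτ => hall τ ⟨hτ.1, hτ.2.le.trans ht.2⟩)

/-! ### Exclusion of nonzero slopes in the hyperbolic region -/

lemma eq_left_of_hasDerivAt_zero {f : ℝ → ℝ} {a b : ℝ}
    (hf : ∀ t ∈ Icc a b, HasDerivAt f 0 t) : ∀ t ∈ Icc a b, f t = f a :=
  constant_of_has_deriv_right_zero (fun t ht => (hf t ht).continuousAt.continuousWithinAt)
    fun t ht => (hf t ⟨ht.1, ht.2.le⟩).hasDerivWithinAt

lemma sSlope_eq_reflX (h : Sol p u v) (t x : ℝ) :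
    rSlope p (fun z => u (z.1, -z.2)) (fun z => -v (z.1, -z.2)) (t, -x)
      = sSlope p u v (t, x) := by
  unfold rSlope sSlope
  rw [Dx_neg (fun z => v (z.1, -z.2)), (partials_reflX h.dv _).2, (partials_reflX h.du _).2]
  simp only [neg_neg]
  ring

lemma sSlope_eq_reflT (h : Sol p u v) (t x : ℝ) :
    rSlope p (fun z => u (-z.1, z.2)) (fun z => -v (-z.1, z.2)) (-t, x)
      = -sSlope p u v (t, x) := by
  unfold rSlope sSlope
  rw [Dx_neg (fun z => v (-z.1, z.2)), (partials_reflT h.dv _).2, (partials_reflT h.du _).2]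
  simp only [neg_neg]
  ring

/-- Forward `-lam`-characteristics with `s_x > 0`; the mirror image of `exists_char`. -/
lemma exists_char_s (hp : Flux p) (h : Sol p u v) {t0 x0 T : ℝ} (hT : t0 ≤ T)
    (hneg : u (t0, x0) < 0) (hS : 0 < sSlope p u v (t0, x0)) :
    ∃ σ : ℝ → ℝ, σ t0 = x0 ∧ ∀ t ∈ Icc t0 T, HasDerivAt σ (-lam p (u (t, σ t))) t ∧
      sInv p u v (t, σ t) = sInv p u v (t0, x0) := by
  obtain ⟨γ, h0, hγ⟩ := exists_char hp h.reflX (x0 := -x0) hT (by simpa using hneg)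
    (by rw [sSlope_eq_reflX h]; exact hS)
  refine ⟨fun t => -γ t, by simp [h0], fun t ht => ⟨(hγ t ht).1.neg, ?_⟩⟩
  have hc := eq_left_of_hasDerivAt_zero
    (fun t ht => rInv_along hp h.reflX (hγ t ht).2.1 (hγ t ht).1) t ht
  simp only [rInv, h0, neg_neg] at hc
  unfold sInv
  linarith

/-- A point with `s_x < 0` is reached by a `-lam`-characteristic from every earlier time, so the
value of `sInv` there was already attained at that time. -/
lemma exists_sInv_eq (hp : Flux p) (h : Sol p u v) {t0 t1 x1 : ℝ} (hT : t0 ≤ t1)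
    (hneg : u (t1, x1) < 0) (hS : sSlope p u v (t1, x1) < 0) :
    ∃ x, sInv p u v (t0, x) = sInv p u v (t1, x1) := by
  obtain ⟨γ, h0, hγ⟩ := exists_char hp h.reflT (t0 := -t1) (x0 := x1) (T := -t0)
    (by linarith) (by simpa using hneg) (by rw [sSlope_eq_reflT h]; linarith)
  have hc := eq_left_of_hasDerivAt_zero
    (fun t ht => rInv_along hp h.reflT (hγ t ht).2.1 (hγ t ht).1) (-t0)
    (right_mem_Icc.2 (by linarith))
  simp only [rInv, h0, neg_neg] at hc
  refine ⟨γ (-t0), ?_⟩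
  unfold sInv
  linarith

lemma le_of_deriv_nonneg_above {f f' : ℝ → ℝ} {a b c : ℝ}
    (hf : ∀ t ∈ Icc a b, HasDerivAt f (f' t) t) (ha : c < f a)
    (hnn : ∀ t ∈ Icc a b, c < f t → 0 ≤ f' t) : ∀ t ∈ Icc a b, f a ≤ f t := by
  intro t ht
  -- Compare with the lines `f a - ε (t - a)`, which stay above `c` for small `ε`.
  have key : ∀ ε > 0, ε * (b - a) < f a - c → f a ≤ f t + ε * (t - a) := by
    intro ε hε hsm
    have := image_le_of_deriv_right_lt_deriv_boundary (f := fun t => -f t) (f' := fun t => -f' t)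
      (a := a) (b := b) (B := fun t => -f a + ε * (t - a)) (B' := fun _ => ε)
      (fun t ht => (hf t ht).neg.continuousAt.continuousWithinAt)
      (fun t ht => (hf t ⟨ht.1, ht.2.le⟩).neg.hasDerivWithinAt) (by simp)
      (fun x => by
        simpa using (((hasDerivAt_id x).sub_const a).const_mul ε).const_add (-f a))
      (fun x hx he => by
        have h1 : ε * (x - a) ≤ ε * (b - a) :=
          mul_le_mul_of_nonneg_left (by linarith [hx.2]) hε.le
        have := hnn x ⟨hx.1, hx.2.le⟩ (by linarith)
        linarith) ht
    linarith
  by_contra! hlt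
  have hab : 0 < b - a + 1 := by linarith [ht.1, ht.2]
  set m := min (f a - c) (f a - f t) with hm
  have hmpos : 0 < m := lt_min (by linarith) (by linarith)
  have hε : m / 2 / (b - a + 1) * (b - a + 1) = m / 2 := by field_simp
  have hεpos : 0 < m / 2 / (b - a + 1) := by positivity
  have h1 : m ≤ f a - c := min_le_left _ _
  have h2 : m ≤ f a - f t := min_le_right _ _
  have h3 : m / 2 / (b - a + 1) * (b - a) ≤ m / 2 := by
    exact (mul_le_mul_of_nonneg_left (by linarith) hεpos.le).trans hε.le
  have h4 : m / 2 / (b - a + 1) * (t - a) ≤ m / 2 / (b - a + 1) * (b - a) :=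
    mul_le_mul_of_nonneg_left (by linarith [ht.2]) hεpos.le
  have := key _ hεpos (by linarith)
  linarith

/-- Along a `lam`-characteristic, `sInv` never exceeds its supremum at the initial time. Otherwise
there is a point of the curve with `s_x > 0` above that level, after which `sInv` is nondecreasing;
the `-lam`-characteristic from this point winds around the cylinder the other way and meets the
curve again with the same value of `sInv`, so that `sInv` is constant in between, against `s_x > 0`.
The meeting takes place within time `1 / lam₀`, where `lam₀` is the initial speed. -/
lemma sInv_le (hp : Flux p) (h : Sol p u v) {t0 T T' S0 : ℝ} {γ : ℝ → ℝ}
    (hγ : ∀ t ∈ Icc t0 T', HasDerivAt γ (lam p (u (t, γ t))) t ∧ u (t, γ t) < 0)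
    (hS0 : ∀ x, sInv p u v (t0, x) ≤ S0) (hTT : T + 1 / lam p (u (t0, γ t0)) ≤ T')
    (hT : t0 ≤ T) : ∀ t ∈ Icc t0 T, sInv p u v (t, γ t) ≤ S0 := by
  have hTle : T ≤ T' := by
    have : 0 ≤ 1 / lam p (u (t0, γ t0)) := one_div_nonneg.2 (Flux.lam_nonneg _)
    linarith
  have ht0 : t0 ∈ Icc t0 T' := ⟨le_rfl, hT.trans hTle⟩
  set l0 := lam p (u (t0, γ t0)) with hl0
  have hl0pos : 0 < l0 := hp.lam_pos (hγ t0 ht0).2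
  set f := fun t => sInv p u v (t, γ t) with hfdef
  set f' := fun t => 2 * lam p (u (t, γ t)) * sSlope p u v (t, γ t) with hf'def
  have hf : ∀ t ∈ Icc t0 T', HasDerivAt f (f' t) t := fun t ht =>
    sInv_along hp h (hγ t ht).2 (hγ t ht).1
  have hfc : ContinuousOn f (Icc t0 T') := fun t ht => (hf t ht).continuousAt.continuousWithinAt
  have hnn : ∀ t ∈ Icc t0 T', S0 < f t → 0 ≤ f' t := by
    intro t ht hlt
    by_contra! hneg
    have hl := hp.lam_pos (hγ t ht).2
    have hs : sSlope p u v (t, γ t) < 0 := by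
      by_contra! hs
      exact absurd hneg (not_lt.2 (by simp only [hf'def]; positivity))
    obtain ⟨x, hx⟩ := exists_sInv_eq hp h ht.1 (hγ t ht).2 hs
    have := hS0 x
    rw [hx] at this
    exact absurd hlt (not_lt.2 this)
  intro t2 ht2
  by_contra! hgt
  have hsub2 : Icc t0 t2 ⊆ Icc t0 T' := Icc_subset_Icc_right (ht2.2.trans hTle)
  -- A point where `f` is above `S0` and increasing.
  obtain ⟨t1, ht1, hft1, hf't1⟩ : ∃ t1 ∈ Icc t0 t2, S0 < f t1 ∧ 0 < f' t1 := by
    have hcomp : IsCompact (Icc t0 t2 ∩ f ⁻¹' Iic S0) :=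
      isCompact_Icc.of_isClosed_subset (ContinuousOn.preimage_isClosed_of_isClosed
        (hfc.mono hsub2) isClosed_Icc isClosed_Iic) inter_subset_left
    obtain ⟨a, ha, hmax⟩ := hcomp.exists_isGreatest
      ⟨t0, left_mem_Icc.2 ht2.1, hS0 (γ t0)⟩
    have hat2 : a < t2 := by
      rcases ha.1.2.lt_or_eq with hlt | heq
      · exact hlt
      · have := ha.2
        rw [heq] at this
        exact absurd hgt (not_lt.2 this)
    have hsub3 : Icc a t2 ⊆ Icc t0 T' := (Icc_subset_Icc_left ha.1.1).trans hsub2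
    obtain ⟨c, hc, hce⟩ := exists_hasDerivAt_eq_slope f f' hat2 (hfc.mono hsub3)
      fun x hx => hf x (hsub3 ⟨hx.1.le, hx.2.le⟩)
    refine ⟨c, ⟨ha.1.1.trans hc.1.le, hc.2.le⟩, ?_, ?_⟩
    · by_contra! hle
      exact absurd (hmax ⟨⟨ha.1.1.trans hc.1.le, hc.2.le⟩, hle⟩) (not_le.2 hc.1)
    · rw [hce]
      have h1 : f a ≤ S0 := ha.2
      exact div_pos (by simp only [hfdef] at h1 ⊢; linarith) (by linarith)
  have ht1' : t1 ∈ Icc t0 T' := hsub2 ht1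
  have hslope : 0 < sSlope p u v (t1, γ t1) := by
    have hl := hp.lam_pos (hγ t1 ht1').2
    by_contra! hs
    exact absurd hf't1 (not_lt.2 (mul_nonpos_of_nonneg_of_nonpos (by positivity) hs))
  have hsub1 : Icc t1 T' ⊆ Icc t0 T' := Icc_subset_Icc_left ht1.1
  have hmono : ∀ a ∈ Icc t1 T', S0 < f a → ∀ t ∈ Icc a T', f a ≤ f t := fun a ha hfa =>
    le_of_deriv_nonneg_above
      (fun t ht => hf t (hsub1 ⟨ha.1.trans ht.1, ht.2⟩)) hfa
      (fun t ht => hnn t (hsub1 ⟨ha.1.trans ht.1, ht.2⟩))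
  have ht1T : t1 ∈ Icc t1 T' := ⟨le_rfl, ht1'.2⟩
  have hlow : ∀ t ∈ Icc t1 T', l0 ≤ lam p (u (t, γ t)) := by
    intro t ht
    have h1 := hmono t1 ht1T hft1 t ht
    have h2 := eq_left_of_hasDerivAt_zero
      (fun t ht => rInv_along hp h (hγ t ht).2 (hγ t ht).1) t (hsub1 ht)
    have h3 := hS0 (γ t0)
    simp only [hfdef, sInv, rInv] at h1 h2 h3 hft1
    have h4 : qfun p (u (t0, γ t0)) < qfun p (u (t, γ t)) := by linarith
    refine hp.lam_antitone ?_
    by_contra! hlt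
    exact absurd (hp.q_antitone hlt.le) (not_le.2 h4)
  obtain ⟨σ, hσ0, hσ⟩ := exists_char_s hp h ht1'.2 (hγ t1 ht1').2 hslope
  set e := t1 + 1 / l0 with he
  have hepos : 0 < 1 / l0 := by positivity
  have heT : e ≤ T' := by linarith [ht1.2, ht2.2]
  have hdd : ∀ t ∈ Icc t1 e, HasDerivAt (fun t => γ t - σ t)
      (lam p (u (t, γ t)) - -lam p (u (t, σ t))) t := fun t ht =>
    (hγ t (hsub1 ⟨ht.1, ht.2.trans heT⟩)).1.sub (hσ t ⟨ht.1, ht.2.trans heT⟩).1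
  have hdc : ContinuousOn (fun t => γ t - σ t) (Icc t1 e) := fun t ht =>
    (hdd t ht).continuousAt.continuousWithinAt
  have hfar : 1 ≤ γ e - σ e := by
    obtain ⟨c, hc, hce⟩ := exists_hasDerivAt_eq_slope _ _ (show t1 < e by linarith) hdc
      fun t ht => hdd t ⟨ht.1.le, ht.2.le⟩
    have h1 := hlow c ⟨hc.1.le, hc.2.le.trans heT⟩
    have h2 : 0 ≤ lam p (u (c, σ c)) := Flux.lam_nonneg _
    rw [hσ0, sub_self, sub_zero, show e - t1 = 1 / l0 by rw [he]; ring, div_div_eq_mul_div,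
      div_one] at hce
    have h3 : l0 * 1 ≤ l0 * (γ e - σ e) := by linarith
    exact le_of_mul_le_mul_left h3 hl0pos
  obtain ⟨t3, ht3, hd3⟩ := intermediate_value_Icc (show t1 ≤ e by linarith) hdc
    (show (1 : ℝ) ∈ Icc (γ t1 - σ t1) (γ e - σ e) from ⟨by rw [hσ0]; simp, hfar⟩)
  simp only at hd3
  have ht13 : t1 < t3 := by
    rcases ht3.1.lt_or_eq with hlt | heq
    · exact hlt
    · rw [← heq, hσ0] at hd3; norm_num at hd3
  have hT3 : t3 ≤ T' := ht3.2.trans heT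
  have hback : f t3 = f t1 := by
    have h1 := (hσ t3 ⟨ht3.1, hT3⟩).2
    simp only [hfdef]
    rw [← h1, show γ t3 = σ t3 + 1 by linarith]
    simp only [sInv, h.perU, h.perV]
  have hconst : ∀ τ ∈ Icc t1 t3, f τ = f t1 := by
    intro τ hτ
    have h1 := hmono t1 ht1T hft1 τ ⟨hτ.1, hτ.2.trans hT3⟩
    have h2 := hmono τ ⟨hτ.1, hτ.2.trans hT3⟩ (hft1.trans_le h1) t3 ⟨hτ.2, hT3⟩
    exact le_antisymm (h2.trans hback.le) h1
  have hz : HasDerivWithinAt f 0 (Icc t1 t3) t1 :=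
    (hasDerivWithinAt_const t1 _ (f t1)).congr hconst rfl
  have := (uniqueDiffOn_Icc ht13 t1 (left_mem_Icc.2 ht13.le)).eq_deriv _
    (hf t1 ht1').hasDerivWithinAt hz
  linarith

/-- A positive slope makes `ySlope` blow up in finite time, since `sInv_le` keeps `u` bounded
along the characteristic and so the Riccati coefficient stays away from zero. -/
lemma rSlope_nonpos (hp : Flux p) (h : Sol p u v) {z : ℝ × ℝ} (hneg : u z < 0) :
    rSlope p u v z ≤ 0 := by
  obtain ⟨t0, x0⟩ := z
  by_contra! hR
  have hsc : Continuous (sInv p u v) :=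
    h.hv.continuous.add (hp.q_differentiable.continuous.comp h.hu.continuous)
  obtain ⟨S0, -, hS0⟩ := exists_periodic_bound hsc
    (fun t x => by simp only [sInv, h.perU, h.perV]) t0 t0
  have hS0' : ∀ x, sInv p u v (t0, x) ≤ S0 := fun x =>
    (le_abs_self _).trans (hS0 t0 ⟨le_rfl, le_rfl⟩ x)
  obtain ⟨U, hU0, hU⟩ := hp.exists_q_gt ((S0 - rInv p u v (t0, x0)) / 2)
  obtain ⟨w0, -, hw0⟩ := isCompact_Icc.exists_isMinOn (nonempty_Icc.2 hU0.le)
    hp.deriv2_continuous.continuousOn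
  set m := deriv (deriv p) w0 with hm
  have hmpos : 0 < m := hp.convex w0
  have hlU := hp.lam_pos hU0
  have hlU' := Real.sqrt_pos.2 hlU
  set k0 := m / (4 * lam p U ^ 2 * Real.sqrt (lam p U)) with hk0
  have hk0pos : 0 < k0 := by positivity
  set y0 := ySlope p u v (t0, x0) with hy0
  have hy0pos : 0 < y0 := mul_pos (Real.sqrt_pos.2 (hp.lam_pos hneg)) hR
  set T := t0 + 1 / (k0 * y0) with hT
  have hTt : t0 < T := by
    have : 0 < 1 / (k0 * y0) := by positivity
    linarith
  have hl0 := hp.lam_pos hneg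
  have hTT : T ≤ T + 1 / lam p (u (t0, x0)) := by
    have : 0 < 1 / lam p (u (t0, x0)) := by positivity
    linarith
  obtain ⟨γ, hγ0, hγ⟩ := exists_char hp h (hTt.le.trans hTT) hneg hR
  have hsle := sInv_le hp h (T := T) (fun t ht => ⟨(hγ t ht).1, (hγ t ht).2.1⟩) hS0'
    (by rw [hγ0]) hTt.le
  have hsub : Icc t0 T ⊆ Icc t0 (T + 1 / lam p (u (t0, x0))) := Icc_subset_Icc_right hTT
  have hUle : ∀ t ∈ Icc t0 T, U ≤ u (t, γ t) := by
    intro t ht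
    have h1 := hsle t ht
    have h2 := eq_left_of_hasDerivAt_zero
      (fun t ht => rInv_along hp h (hγ t ht).2.1 (hγ t ht).1) t (hsub ht)
    simp only [hγ0] at h2
    by_contra! hlt
    have h3 := hp.q_antitone hlt.le
    rw [← h2] at hU
    simp only [sInv, rInv] at h1 hU
    linarith
  have hk : ∀ t ∈ Icc t0 T, k0 ≤ kCoef p (u (t, γ t)) := by
    intro t ht
    have hn := (hγ t (hsub ht)).2.1
    have h1 : m ≤ deriv (deriv p) (u (t, γ t)) := hw0 ⟨hUle t ht, hn.le⟩
    have h2 := hp.lam_antitone (hUle t ht)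
    have h3 := hp.lam_pos hn
    have h4 := Real.sqrt_pos.2 h3
    have h5 := Real.sqrt_le_sqrt h2
    unfold kCoef
    rw [hk0]
    have h6 := (hp.convex (u (t, γ t))).le
    gcongr
  -- `1 / y` decreases at rate at least `k0`.
  have hinv : AntitoneOn (fun t => (ySlope p u v (t, γ t))⁻¹ + k0 * t) (Icc t0 T) := by
    have hd : ∀ t ∈ Icc t0 T, HasDerivAt (fun t => (ySlope p u v (t, γ t))⁻¹ + k0 * t)
        (-(kCoef p (u (t, γ t)) * ySlope p u v (t, γ t) ^ 2) / ySlope p u v (t, γ t) ^ 2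
          + k0 * 1) t := fun t ht =>
      ((ySlope_along hp h (hγ t (hsub ht)).2.1 (hγ t (hsub ht)).1).fun_inv
        (hγ t (hsub ht)).2.2.ne').add ((hasDerivAt_id t).const_mul k0)
    refine antitoneOn_of_deriv_nonpos (convex_Icc _ _)
      (fun t ht => (hd t ht).continuousAt.continuousWithinAt)
      (fun t ht => (hd t (interior_subset ht)).differentiableAt.differentiableWithinAt)
      fun t ht => ?_
    have ht' := interior_subset ht
    rw [(hd t ht').deriv]
    have hy := (hγ t (hsub ht')).2.2
    have := hk t ht'
    rw [neg_div, mul_div_assoc, div_self (by positivity)]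
    linarith
  have h1 := hinv (left_mem_Icc.2 hTt.le) (right_mem_Icc.2 hTt.le) hTt.le
  have h2 := inv_pos.2 (hγ T (hsub (right_mem_Icc.2 hTt.le))).2.2
  simp only [hγ0, ← hy0] at h1
  have h3 : k0 * T = k0 * t0 + y0⁻¹ := by rw [hT]; field_simp
  linarith

/-- In the hyperbolic region all first derivatives vanish. -/
lemma slopes_zero (hp : Flux p) (h : Sol p u v) {z : ℝ × ℝ} (hneg : u z < 0) :
    Dx u z = 0 ∧ Dx v z = 0 := by
  obtain ⟨t, x⟩ := z
  have h1 := rSlope_nonpos hp h hneg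
  have h2 := rSlope_nonpos hp h.reflX (z := (t, -x)) (by simpa using hneg)
  rw [sSlope_eq_reflX h] at h2
  have h3 := rSlope_nonpos hp h.reflT (z := (-t, x)) (by simpa using hneg)
  rw [sSlope_eq_reflT h] at h3
  have h4 := rSlope_nonpos hp h.reflT.reflX (z := (-t, -x)) (by simpa using hneg)
  rw [sSlope_eq_reflX h.reflT] at h4
  have h5 : sSlope p (fun z => u (-z.1, z.2)) (fun z => -v (-z.1, z.2)) (-t, x)
      = -rSlope p u v (t, x) := by
    unfold rSlope sSlope
    rw [Dx_neg (fun z => v (-z.1, z.2)), (partials_reflT h.dv _).2,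
      (partials_reflT h.du _).2]
    simp only [neg_neg]
    ring
  rw [h5] at h4
  have hl := hp.lam_pos hneg
  unfold rSlope at h1 h4
  unfold sSlope at h2 h3
  have h6 : lam p (u (t, x)) * Dx u (t, x) = 0 := by linarith
  have h7 : Dx u (t, x) = 0 := (mul_eq_zero.1 h6).resolve_left hl.ne'
  exact ⟨h7, by linarith⟩

lemma fderiv_eq_zero {f : ℝ × ℝ → ℝ} {z : ℝ × ℝ} (h1 : Dt f z = 0) (h2 : Dx f z = 0) :
    fderiv ℝ f z = 0 := by
  ext <;> simpa [Dt, Dx] using by assumption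

/-- If the hyperbolic region is nonempty then `q(u)` has zero derivative everywhere (`q' = -lam`
vanishes on the elliptic side), so `u` is a negative constant. -/
lemma const_of_neg (hp : Flux p) (h : Sol p u v) {z0 : ℝ × ℝ} (hz0 : u z0 < 0) :
    (∀ z, u z = u z0) ∧ ∀ z, v z = v z0 := by
  have hzero : ∀ z, u z < 0 → fderiv ℝ u z = 0 ∧ fderiv ℝ v z = 0 := by
    intro z hz
    obtain ⟨h1, h2⟩ := slopes_zero hp h hz
    exact ⟨fderiv_eq_zero (by rw [h.eq1, h2, neg_zero]) h1,
      fderiv_eq_zero (by rw [h.eq2, h1, mul_zero]) h2⟩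
  have hq : ∀ z, qfun p (u z) = qfun p (u z0) := fun z => by
    refine is_const_of_fderiv_eq_zero (𝕜 := ℝ) (f := fun z => qfun p (u z))
      (hp.q_differentiable.comp h.du) (fun z => ?_) z z0
    have hd := (hp.q_hasDerivAt (u z)).comp_hasFDerivAt z (h.du z).hasFDerivAt
    have hd' : fderiv ℝ (fun z => qfun p (u z)) z = -lam p (u z) • fderiv ℝ u z := hd.fderiv
    rw [hd']
    rcases lt_or_ge (u z) 0 with hz | hz
    · rw [(hzero z hz).1, smul_zero]
    · have h0 := hp.deriv_strictMono.monotone hz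
      rw [hp.deriv_zero] at h0
      rw [show lam p (u z) = 0 from Real.sqrt_eq_zero_of_nonpos (by linarith), neg_zero, zero_smul]
  have hanti : StrictAntiOn (qfun p) (Iic 0) := by
    refine strictAntiOn_of_deriv_neg (convex_Iic 0) hp.q_differentiable.continuous.continuousOn
      fun w hw => ?_
    rw [interior_Iic] at hw
    rw [(hp.q_hasDerivAt w).deriv]
    exact neg_neg_of_pos (hp.lam_pos hw)
  have hneg : ∀ z, u z < 0 := by
    intro z
    by_contra! hz
    have h1 := hp.q_antitone hz
    have h2 := hanti hz0.le (mem_Iic.2 le_rfl) hz0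
    rw [hq z] at h1
    linarith
  refine ⟨fun z => hanti.injOn (hneg z).le hz0.le (hq z), fun z => ?_⟩
  exact is_const_of_fderiv_eq_zero (𝕜 := ℝ) h.dv (fun z => (hzero z (hneg z)).2) z z0

/-! ### The elliptic case `u ≥ 0` -/

lemma hasDerivAt_integral_param {f f' : ℝ → ℝ → ℝ} (hf : Continuous fun z : ℝ × ℝ => f z.1 z.2)
    (hf' : Continuous fun z : ℝ × ℝ => f' z.1 z.2)
    (hd : ∀ t x, HasDerivAt (fun t => f t x) (f' t x) t) (a b t : ℝ) :
    HasDerivAt (fun t => ∫ x in a..b, f t x) (∫ x in a..b, f' t x) t := by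
  have hs : ∀ {g : ℝ → ℝ → ℝ}, (Continuous fun z : ℝ × ℝ => g z.1 z.2) → ∀ t, Continuous (g t) :=
    fun hg t => hg.comp (continuous_const.prodMk continuous_id)
  obtain ⟨C, hC⟩ := (isCompact_Icc.prod isCompact_uIcc :
    IsCompact (Icc (t - 1) (t + 1) ×ˢ uIcc a b)).exists_bound_of_continuousOn hf'.continuousOn
  refine (intervalIntegral.hasDerivAt_integral_of_dominated_loc_of_deriv_le (F := f) (F' := f')
    (bound := fun _ => C) (Icc_mem_nhds (by linarith) (by linarith) :
      Icc (t - 1) (t + 1) ∈ 𝓝 t) ?_ ?_ ?_ ?_ ?_ ?_).2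
  · exact Eventually.of_forall fun s => (hs hf s).aestronglyMeasurable
  · exact (hs hf t).intervalIntegrable _ _
  · exact (hs hf' t).aestronglyMeasurable
  · exact Eventually.of_forall fun x hx s hs => hC (s, x) ⟨hs, uIoc_subset_uIcc hx⟩
  · exact intervalIntegrable_const
  · exact Eventually.of_forall fun x _ s _ => hd s x

/-- A bounded function on `ℝ` with nonnegative second derivative has zero second derivative. -/
lemma second_deriv_zero_of_bounded {F F' F'' : ℝ → ℝ} {B : ℝ} (h1 : ∀ t, HasDerivAt F (F' t) t)
    (h2 : ∀ t, HasDerivAt F' (F'' t) t) (hnn : ∀ t, 0 ≤ F'' t) (hB : ∀ t, |F t| ≤ B) (t : ℝ) :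
    F'' t = 0 := by
  have hmono : Monotone F' := monotone_of_deriv_nonneg (fun t => (h2 t).differentiableAt)
    fun t => by rw [(h2 t).deriv]; exact hnn t
  have hzero : ∀ s, F' s = 0 := by
    intro s
    by_contra hne
    -- Follow the tangent line at `s` in the direction in which it increases.
    set d := (2 * B + 1) / F' s with hd
    have hmul : F' s * d = 2 * B + 1 := by rw [hd]; field_simp
    have hB0 : 0 ≤ B := (abs_nonneg _).trans (hB 0)
    have hgrow : F s + F' s * d ≤ F (s + d) := by
      have hdne : d ≠ 0 := fun h0 => by rw [h0] at hmul; linarith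
      rcases lt_or_gt_of_ne hdne with hneg | hpos
      · obtain ⟨c, hc, hce⟩ := exists_hasDerivAt_eq_slope F F' (show s + d < s by linarith)
          (fun x _ => (h1 x).continuousAt.continuousWithinAt) fun x _ => h1 x
        have := hmono hc.2.le
        rw [hce, div_le_iff₀ (by linarith)] at this
        linarith
      · obtain ⟨c, hc, hce⟩ := exists_hasDerivAt_eq_slope F F' (show s < s + d by linarith)
          (fun x _ => (h1 x).continuousAt.continuousWithinAt) fun x _ => h1 x
        have := hmono hc.1.le
        rw [hce, le_div_iff₀ (by linarith)] at this
        linarith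
    have a1 := abs_le.1 (hB s)
    have a2 := abs_le.1 (hB (s + d))
    linarith [a1.1, a2.2]
  have hc : F' = fun _ => 0 := funext hzero
  have := h2 t
  rw [hc] at this
  exact this.unique (hasDerivAt_const t 0)

lemma const_of_hasDerivAt_zero {f : ℝ → ℝ} (hf : ∀ t, HasDerivAt f 0 t) (t s : ℝ) : f t = f s :=
  is_const_of_deriv_eq_zero (fun t => (hf t).differentiableAt) (fun t => (hf t).deriv) t s

/-- With means `m` of `u` and `a` of `v`, the potential `φ` with `φ_x = u - m`, `φ_t = -(v - a)` is
periodic, has conserved mean and, as `u ≥ 0`, bounded oscillation. Hence `∫ φ²` is bounded, while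
its second derivative `2 ∫ (v - a)² + (u - m) (p(u) - p(m))` is nonnegative by monotonicity of
`p` on `[0, ∞)`; so it vanishes. -/
lemma const_of_nonneg (hp : Flux p) (h : Sol p u v) (hnn : ∀ z, 0 ≤ u z) :
    ∃ m a, (∀ z, u z = m) ∧ ∀ z, v z = a := by
  have cu := h.hu.continuous
  have cv := h.hv.continuous
  have cux := h.cDxu
  have cvx := h.cDxv
  have cp := hp.smooth.continuous
  have cp' := hp.deriv_contDiff.continuous
  have slice : ∀ t : ℝ, Continuous fun x : ℝ => (t, x) := fun t => by fun_prop
  have hux : ∀ t x, HasDerivAt (fun y => u (t, y)) (Dx u (t, x)) x := fun t x =>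
    hasDerivAt_x t x (h.du _)
  have hvx : ∀ t x, HasDerivAt (fun y => v (t, y)) (Dx v (t, x)) x := fun t x =>
    hasDerivAt_x t x (h.dv _)
  have hut : ∀ t x, HasDerivAt (fun s => u (s, x)) (-Dx v (t, x)) t := fun t x => by
    rw [← h.eq1]; exact hasDerivAt_t t x (h.du _)
  have hvt : ∀ t x, HasDerivAt (fun s => v (s, x)) (deriv p (u (t, x)) * Dx u (t, x)) t :=
    fun t x => by rw [← h.eq2]; exact hasDerivAt_t t x (h.dv _)
  have hpux : ∀ t x, HasDerivAt (fun y => p (u (t, y))) (deriv p (u (t, x)) * Dx u (t, x)) x :=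
    fun t x => (hp.hasDerivAt _).comp x (hux t x)
  have hu1 : ∀ t, u (t, 1) = u (t, 0) := fun t => by simpa using h.perU t 0
  have hv1 : ∀ t, v (t, 1) = v (t, 0) := fun t => by simpa using h.perV t 0
  have ivx : ∀ t x, ∫ y in (0 : ℝ)..x, Dx v (t, y) = v (t, x) - v (t, 0) := fun t x =>
    intervalIntegral.integral_eq_sub_of_hasDerivAt (fun y _ => hvx t y)
      ((cvx.comp (slice t)).intervalIntegrable _ _)
  -- Conservation of the means of `u` and `v`.
  set m := ∫ x in (0 : ℝ)..1, u (0, x) with hm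
  have hmean_u : ∀ t, ∫ x in (0 : ℝ)..1, u (t, x) = m := fun t => by
    refine const_of_hasDerivAt_zero (f := fun t => ∫ x in (0 : ℝ)..1, u (t, x)) (fun t => ?_) t 0
    refine (hasDerivAt_integral_param (f := fun t x => u (t, x)) (f' := fun t x => -Dx v (t, x))
      cu cvx.neg hut 0 1 t).congr_deriv ?_
    rw [intervalIntegral.integral_neg, ivx, hv1, sub_self, neg_zero]
  set a := ∫ x in (0 : ℝ)..1, v (0, x) with ha
  have hmean_v : ∀ t, ∫ x in (0 : ℝ)..1, v (t, x) = a := fun t => by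
    refine const_of_hasDerivAt_zero (f := fun t => ∫ x in (0 : ℝ)..1, v (t, x)) (fun t => ?_) t 0
    refine (hasDerivAt_integral_param (f := fun t x => v (t, x))
      (f' := fun t x => deriv p (u (t, x)) * Dx u (t, x))
      cv ((cp'.comp cu).mul cux) hvt 0 1 t).congr_deriv ?_
    rw [intervalIntegral.integral_eq_sub_of_hasDerivAt (fun y _ => hpux t y)
      ((((cp'.comp cu).mul cux).comp (slice t)).intervalIntegrable _ _), hu1, sub_self]
  have hm0 : 0 ≤ m := intervalIntegral.integral_nonneg zero_le_one fun x _ => hnn _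
  -- The potential.
  set φ : ℝ → ℝ → ℝ := fun t x => (∫ y in (0 : ℝ)..x, (u (t, y) - m)) -
    ∫ s in (0 : ℝ)..t, (v (s, 0) - a) with hφ
  have cφ : Continuous fun z : ℝ × ℝ => φ z.1 z.2 := by
    refine Continuous.sub ?_ ?_
    · exact intervalIntegral.continuous_parametric_intervalIntegral_of_continuous
        (f := fun (z : ℝ × ℝ) y => u (z.1, y) - m) (by fun_prop) continuous_snd
    · exact (intervalIntegral.continuous_primitive (fun a b =>
        Continuous.intervalIntegrable (by fun_prop) a b) 0).comp continuous_fst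
  have hφx : ∀ t x, HasDerivAt (fun y => φ t y) (u (t, x) - m) x := fun t x => by
    have hc : Continuous fun y => u (t, y) - m := (cu.comp (slice t)).sub continuous_const
    exact (intervalIntegral.integral_hasDerivAt_right (hc.intervalIntegrable _ _)
      (hc.stronglyMeasurableAtFilter _ _) hc.continuousAt).sub_const _
  have hφt : ∀ t x, HasDerivAt (fun s => φ s x) (-(v (t, x) - a)) t := fun t x => by
    have hc : Continuous fun s => v (s, 0) - a := by fun_prop
    have d1 := hasDerivAt_integral_param (f := fun t y => u (t, y) - m)
      (f' := fun t y => -Dx v (t, y)) (cu.sub continuous_const) cvx.neg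
      (fun t y => (hut t y).sub_const m) 0 x t
    have d2 := intervalIntegral.integral_hasDerivAt_right (hc.intervalIntegrable 0 t)
      (hc.stronglyMeasurableAtFilter _ _) hc.continuousAt
    refine (d1.sub d2).congr_deriv ?_
    rw [intervalIntegral.integral_neg, ivx]
    ring
  have hint : ∀ t, IntervalIntegrable (fun x => u (t, x)) MeasureTheory.volume 0 1 := fun t =>
    (cu.comp (slice t)).intervalIntegrable _ _
  have hintv : ∀ t, IntervalIntegrable (fun x => v (t, x)) MeasureTheory.volume 0 1 := fun t =>
    (cv.comp (slice t)).intervalIntegrable _ _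
  have hφ1 : ∀ t, φ t 1 = φ t 0 := fun t => by
    simp only [hφ]
    rw [intervalIntegral.integral_sub (hint t) intervalIntegrable_const, hmean_u]
    simp
  have sφ : ∀ t, Continuous (φ t) := fun t => cφ.comp (slice t)
  set c0 := ∫ x in (0 : ℝ)..1, φ 0 x with hc0
  have hmean_φ : ∀ t, ∫ x in (0 : ℝ)..1, φ t x = c0 := fun t => by
    refine const_of_hasDerivAt_zero (f := fun t => ∫ x in (0 : ℝ)..1, φ t x) (fun t => ?_) t 0
    refine (hasDerivAt_integral_param (f := φ) (f' := fun t x => -(v (t, x) - a))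
      cφ (cv.sub continuous_const).neg hφt 0 1 t).congr_deriv ?_
    rw [intervalIntegral.integral_neg, intervalIntegral.integral_sub
      (hintv t) intervalIntegrable_const, hmean_v]
    simp
  -- `φ(t, x) + m x` is nondecreasing in `x`.
  have hosc : ∀ t, ∀ x ∈ Icc (0 : ℝ) 1, |φ t x - φ t 0| ≤ m := by
    intro t x hx
    have hmono : Monotone fun y => φ t y + m * y := by
      have hd : ∀ y, HasDerivAt (fun y => φ t y + m * y) (u (t, y) - m + m * 1) y := fun y =>
        (hφx t y).add ((hasDerivAt_id y).const_mul m)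
      refine monotone_of_deriv_nonneg (fun y => (hd y).differentiableAt) fun y => ?_
      rw [(hd y).deriv]
      linarith [hnn (t, y)]
    have h1 := hmono hx.1
    have h2 := hmono hx.2
    simp only [mul_zero, add_zero, mul_one, hφ1] at h1 h2
    have h3 : 0 ≤ m * x := mul_nonneg hm0 hx.1
    have h4 : m * x ≤ m * 1 := mul_le_mul_of_nonneg_left hx.2 hm0
    exact abs_le.2 ⟨by linarith, by linarith⟩
  have hφ0 : ∀ t, |c0 - φ t 0| ≤ m := by
    intro t
    have h1 : c0 - φ t 0 = ∫ x in (0 : ℝ)..1, (φ t x - φ t 0) := by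
      rw [intervalIntegral.integral_sub ((sφ t).intervalIntegrable _ _) intervalIntegrable_const,
        hmean_φ]
      simp
    rw [h1]
    have := intervalIntegral.norm_integral_le_of_norm_le_const (a := (0 : ℝ)) (b := 1) (C := m)
      (f := fun x => φ t x - φ t 0) fun x hx => by
        rw [uIoc_of_le zero_le_one] at hx
        exact hosc t x ⟨hx.1.le, hx.2⟩
    simpa using this
  have hφb : ∀ t, ∀ x ∈ Icc (0 : ℝ) 1, |φ t x| ≤ |c0| + 2 * m := by
    intro t x hx
    have h1 := abs_le.1 (hosc t x hx)
    have h2 := abs_le.1 (hφ0 t)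
    have h3 := le_abs_self c0
    have h4 := neg_abs_le c0
    exact abs_le.2 ⟨by linarith [h1.1, h2.2], by linarith [h1.2, h2.1]⟩
  -- The bounded convex function `∫ φ²`.
  have hF1 : ∀ t, HasDerivAt (fun t => ∫ x in (0 : ℝ)..1, φ t x ^ 2)
      (∫ x in (0 : ℝ)..1, -2 * (φ t x * (v (t, x) - a))) t := fun t =>
    hasDerivAt_integral_param (f := fun t x => φ t x ^ 2)
      (f' := fun t x => -2 * (φ t x * (v (t, x) - a))) (cφ.pow 2)
      (continuous_const.mul (cφ.mul (cv.sub continuous_const)))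
      (fun t x => ((hφt t x).fun_pow 2).congr_deriv (by push_cast; ring)) 0 1 t
  set G : ℝ → ℝ → ℝ := fun t x =>
    2 * ((v (t, x) - a) ^ 2 + (u (t, x) - m) * (p (u (t, x)) - p m)) with hG
  have cG : ∀ t, Continuous (G t) := fun t => by
    have c1 := cu.comp (slice t)
    have c2 := cv.comp (slice t)
    exact continuous_const.mul (((c2.sub continuous_const).pow 2).add
      ((c1.sub continuous_const).mul ((cp.comp c1).sub continuous_const)))
  have hF2 : ∀ t, HasDerivAt (fun t => ∫ x in (0 : ℝ)..1, -2 * (φ t x * (v (t, x) - a)))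
      (∫ x in (0 : ℝ)..1, G t x) t := by
    intro t
    have d := hasDerivAt_integral_param (f := fun t x => -2 * (φ t x * (v (t, x) - a)))
      (f' := fun t x => 2 * (v (t, x) - a) ^ 2
        - 2 * (φ t x * (deriv p (u (t, x)) * Dx u (t, x))))
      (continuous_const.mul (cφ.mul (cv.sub continuous_const)))
      ((continuous_const.mul ((cv.sub continuous_const).pow 2)).sub
        (continuous_const.mul (cφ.mul ((cp'.comp cu).mul cux))))
      (fun t x => (((hφt t x).mul ((hvt t x).sub_const a)).const_mul (-2)).congr_deriv
        (by ring)) 0 1 t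
    refine d.congr_deriv ?_
    -- The difference of the two integrands is the `x`-derivative of a periodic function.
    have hdiff : ∀ x, HasDerivAt (fun x => -2 * (φ t x * (p (u (t, x)) - p m)))
        (-2 * ((u (t, x) - m) * (p (u (t, x)) - p m)
          + φ t x * (deriv p (u (t, x)) * Dx u (t, x)))) x := fun x =>
      ((hφx t x).mul ((hpux t x).sub_const (p m))).const_mul (-2)
    have c1 := cu.comp (slice t)
    have c2 := cv.comp (slice t)
    have c3 := ((cp'.comp cu).mul cux).comp (slice t)
    have c4 := cp.comp c1
    have hI := intervalIntegral.integral_eq_sub_of_hasDerivAt (a := 0) (b := 1)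
      (fun x _ => hdiff x) (Continuous.intervalIntegrable
        (continuous_const.mul (((c1.sub continuous_const).mul (c4.sub continuous_const)).add
          ((sφ t).mul c3))) _ _)
    rw [hu1, hφ1, sub_self] at hI
    rw [← sub_eq_zero, ← intervalIntegral.integral_sub]
    · refine Eq.trans ?_ hI
      refine intervalIntegral.integral_congr fun x _ => ?_
      simp only [hG]
      ring
    · exact Continuous.intervalIntegrable ((continuous_const.mul
        ((c2.sub continuous_const).pow 2)).sub (continuous_const.mul ((sφ t).mul c3))) _ _
    · exact (cG t).intervalIntegrable _ _
  have hpmono : StrictMonoOn p (Ici 0) := by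
    refine strictMonoOn_of_deriv_pos (convex_Ici 0) cp.continuousOn fun w hw => ?_
    rw [interior_Ici] at hw
    have := hp.deriv_strictMono hw
    rwa [hp.deriv_zero] at this
  have hprod : ∀ w, 0 ≤ w → 0 ≤ (w - m) * (p w - p m) := by
    intro w hw
    rcases le_total w m with hle | hle
    · exact mul_nonneg_of_nonpos_of_nonpos (by linarith)
        (by linarith [hpmono.monotoneOn hw hm0 hle])
    · exact mul_nonneg (by linarith) (by linarith [hpmono.monotoneOn hm0 hw hle])
  have hGnn : ∀ t x, 0 ≤ G t x := fun t x => by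
    have h1 := hprod _ (hnn (t, x))
    simp only [hG]
    positivity
  have hFb : ∀ t, |∫ x in (0 : ℝ)..1, φ t x ^ 2| ≤ (|c0| + 2 * m) ^ 2 := by
    intro t
    have := intervalIntegral.norm_integral_le_of_norm_le_const (a := (0 : ℝ)) (b := 1)
      (C := (|c0| + 2 * m) ^ 2) (f := fun x => φ t x ^ 2) fun x hx => by
        rw [uIoc_of_le zero_le_one] at hx
        rw [norm_pow, Real.norm_eq_abs]
        exact pow_le_pow_left₀ (abs_nonneg _) (hφb t x ⟨hx.1.le, hx.2⟩) 2
    simpa using this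
  have hzero := second_deriv_zero_of_bounded hF1 hF2
    (fun t => intervalIntegral.integral_nonneg zero_le_one fun x _ => hGnn t x) hFb
  have hG0 : ∀ t, ∀ x ∈ Icc (0 : ℝ) 1, G t x = 0 := by
    intro t x hx
    by_contra hne
    have hpos : 0 < G t x := lt_of_le_of_ne (hGnn t x) (Ne.symm hne)
    have := intervalIntegral.integral_pos zero_lt_one (cG t).continuousOn
      (fun x _ => hGnn t x) ⟨x, hx, hpos⟩
    rw [hzero t] at this
    exact lt_irrefl _ this
  have hfin : ∀ t, ∀ x ∈ Icc (0 : ℝ) 1, u (t, x) = m ∧ v (t, x) = a := by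
    intro t x hx
    have h0 := hG0 t x hx
    have h1 := hprod _ (hnn (t, x))
    have h2 := sq_nonneg (v (t, x) - a)
    simp only [hG] at h0
    have h3 : (v (t, x) - a) ^ 2 = 0 := by linarith
    have h4 : (u (t, x) - m) * (p (u (t, x)) - p m) = 0 := by linarith
    refine ⟨?_, sub_eq_zero.1 (pow_eq_zero_iff two_ne_zero |>.1 h3)⟩
    rcases mul_eq_zero.1 h4 with h5 | h5
    · exact sub_eq_zero.1 h5
    · exact hpmono.injOn (hnn (t, x)) hm0 (sub_eq_zero.1 h5)
  have hper : ∀ {f : ℝ × ℝ → ℝ} {c : ℝ}, (∀ t x, f (t, x + 1) = f (t, x)) →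
      (∀ t, ∀ x ∈ Icc (0 : ℝ) 1, f (t, x) = c) → ∀ z, f z = c := by
    intro f c hf hfc z
    have hP : Function.Periodic (fun x => f (z.1, x)) 1 := fun x => hf z.1 x
    obtain ⟨y, hy, hxy⟩ := hP.exists_mem_Ico₀ one_pos z.2
    exact hxy.trans (hfc z.1 y ⟨hy.1, hy.2.le⟩)
  exact ⟨m, a, hper h.perU fun t x hx => (hfin t x hx).1,
    hper h.perV fun t x hx => (hfin t x hx).2⟩

end

end PSys

/-- Theorem 1.2: a `C²` solution of the p-system on the whole cylinder
(1-periodic in `x`) is constant. -/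
theorem psystem_whole_cylinder_constant
    (p : ℝ → ℝ) (hp : ContDiff ℝ 2 p) (hconv : ∀ w : ℝ, 0 < deriv (deriv p) w)
    (hp0 : p 0 = 0) (hp'0 : deriv p 0 = 0)
    (u v : ℝ × ℝ → ℝ) (hu : ContDiff ℝ 2 u) (hv : ContDiff ℝ 2 v)
    (hsys : PSystem p u v Set.univ)
    (huper : ∀ t x : ℝ, u (t, x + 1) = u (t, x))
    (hvper : ∀ t x : ℝ, v (t, x + 1) = v (t, x)) :
    (∃ cu : ℝ, ∀ z : ℝ × ℝ, u z = cu) ∧ (∃ cv : ℝ, ∀ z : ℝ × ℝ, v z = cv) := by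
  have hF : PSys.Flux p := ⟨hp, hconv, hp'0⟩
  have du : Differentiable ℝ u := hu.differentiable (by norm_num)
  have dv : Differentiable ℝ v := hv.differentiable (by norm_num)
  have hS : PSys.Sol p u v :=
    { hu := hu
      hv := hv
      eq1 := fun z => by
        have h1 := (hsys z (Set.mem_univ z)).1
        rwa [(PSys.hasDerivAt_t z.1 z.2 (du _)).deriv,
          (PSys.hasDerivAt_x z.1 z.2 (dv _)).deriv] at h1
      eq2 := fun z => by
        have h2 := (hsys z (Set.mem_univ z)).2
        have hc : HasDerivAt (fun y => p (u (z.1, y))) (deriv p (u z) * PSys.Dx u z) z.2 :=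
          (hF.hasDerivAt (u z)).comp z.2 (PSys.hasDerivAt_x z.1 z.2 (du _))
        rwa [(PSys.hasDerivAt_t z.1 z.2 (dv _)).deriv, hc.deriv] at h2
      perU := huper
      perV := hvper }
  by_cases hneg : ∃ z0, u z0 < 0
  · obtain ⟨z0, hz0⟩ := hneg
    obtain ⟨h1, h2⟩ := PSys.const_of_neg hF hS hz0
    exact ⟨⟨_, h1⟩, ⟨_, h2⟩⟩
  · push Not at hneg
    obtain ⟨m, a, h1, h2⟩ := PSys.const_of_nonneg hF hS hneg
    exact ⟨⟨m, h1⟩, ⟨a, h2⟩⟩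
end
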